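/- arXiv:2110.08714 — 2 statements merged into one kernel-verified Lean document; each statement's English description precedes it below -/
import Mathlib

section
/- Let p be a prime, d > 0 an integer, and set g = d(p-1)/2. Assume d is even when p = 2, r ≤ ⌊d/2⌋, τ = r(p-1). Then in the large q limit (q ranging over powers of p), the proportion of admissible rational functions f ∈ S_g(F_q) whose Artin–Schreier cover has p-rank τ converges to M_p(r+1, d+2)/M_p(d+2). -/
open Polynomial

/-- `f` (a rational function over an algebraically closed field containing the base field)
is admissible with invariants `d` and `r`: it has a partial fraction decomposition
`f = c + Σ_{α ∈ B} f_α(1/(x-α))` where each `f_α` is a nonzero polynomial with zero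
constant term whose coefficient of `x^j` vanishes whenever `p ∣ j`, the number of poles
is `#B = r + 1`, and `d + 2 = Σ_{α ∈ B} (d_α + 1)` with `d_α = deg f_α` the pole orders.
(The genus of the associated Artin–Schreier cover `y^p - y = f` is then `d(p-1)/2` by
Riemann–Hurwitz and its `p`-rank is `r(p-1)` by Deuring–Shafarevich.) -/
def AdmissibleData (p : ℕ) {K : Type*} [Field K] (f : RatFunc K) (d r : ℕ) : Prop :=
  ∃ (c : K) (B : Finset K) (fα : K → Polynomial K),
    (∀ α ∈ B, fα α ≠ 0) ∧
    (∀ α ∈ B, (fα α).coeff 0 = 0) ∧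
    (∀ α ∈ B, ∀ j : ℕ, p ∣ j → (fα α).coeff j = 0) ∧
    f = RatFunc.C c + ∑ α ∈ B, Polynomial.aeval ((RatFunc.X - RatFunc.C α)⁻¹) (fα α) ∧
    B.card = r + 1 ∧
    d + 2 = ∑ α ∈ B, ((fα α).natDegree + 1)

/-- The base change of a rational function over `F` along a field embedding `φ : F → K`. -/
noncomputable def RatFunc.baseChange {F K : Type*} [Field F] [Field K] (φ : F →+* K)
    (f : RatFunc F) : RatFunc K :=
  algebraMap (Polynomial K) (RatFunc K) (f.num.map φ) /
    algebraMap (Polynomial K) (RatFunc K) (f.denom.map φ)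

/-- `#S_{g,τ}(F)`: the number of admissible rational functions over `F` of genus
`g = d(p-1)/2` and `p`-rank `τ = r(p-1)`. -/
noncomputable def SCount (p d r : ℕ) (F : Type) [Field F] : ℕ :=
  Nat.card {f : RatFunc F //
    AdmissibleData p (RatFunc.baseChange (algebraMap F (AlgebraicClosure F)) f) d r}

/-- `#S_g(F)`: the number of admissible rational functions over `F` of genus `g = d(p-1)/2`. -/
noncomputable def STotal (p d : ℕ) (F : Type) [Field F] : ℕ :=
  Nat.card {f : RatFunc F // ∃ r : ℕ,
    AdmissibleData p (RatFunc.baseChange (algebraMap F (AlgebraicClosure F)) f) d r}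

/-- `M_p(r+1, d+2)`: the number of partitions of `d+2` into exactly `r+1` parts,
each lying in `{2, …, p}`. -/
def Mp (p d r : ℕ) : ℕ :=
  (Finset.univ.filter (fun P : Nat.Partition (d + 2) =>
      Multiset.card P.parts = r + 1 ∧ ∀ i ∈ P.parts, 2 ≤ i ∧ i ≤ p)).card

/-- `M_p(d+2) = Σ_{r=0}^{⌊d/2⌋} M_p(r+1, d+2)`. -/
def MpTotal (p d : ℕ) : ℕ := ∑ r ∈ Finset.range (d / 2 + 1), Mp p d r

namespace ASP

noncomputable def evD {K : Type*} [Field K] (c : K) (g : K →₀ K[X]) : RatFunc K :=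
  RatFunc.C c + g.sum fun α P => aeval ((RatFunc.X - RatFunc.C α)⁻¹) P

lemma evD_sub {K : Type*} [Field K] (c c' : K) (g g' : K →₀ K[X]) :
    evD (c - c') (g - g') = evD c g - evD c' g' := by
  classical
  unfold evD
  rw [Finsupp.sum_sub_index (by intros; simp), map_sub]
  ring

lemma XsubC_ne {K : Type*} [Field K] (α : K) : (RatFunc.X - RatFunc.C α : RatFunc K) ≠ 0 := by
  have : (RatFunc.X - RatFunc.C α : RatFunc K) = algebraMap K[X] (RatFunc K) (X - C α) := by
    simp
  rw [this]
  exact RatFunc.algebraMap_ne_zero (X_sub_C_ne_zero α)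

lemma aeval_mul_pow {K : Type*} [Field K] (α : K) (P : K[X]) :
    aeval ((RatFunc.X - RatFunc.C α)⁻¹) P =
      algebraMap K[X] (RatFunc K) (P.reverse.comp (X - C α)) *
        (algebraMap K[X] (RatFunc K) ((X - C α) ^ P.natDegree))⁻¹ := by
  have h0 := XsubC_ne α
  let _ : Invertible ((RatFunc.X - RatFunc.C α : RatFunc K)⁻¹) := invertibleOfNonzero (inv_ne_zero h0)
  have h := eval₂_reverse_mul_pow (algebraMap K (RatFunc K)) ((RatFunc.X - RatFunc.C α)⁻¹) P
  rw [invOf_eq_inv, inv_inv] at h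
  rw [aeval_def, ← h]
  congr 1
  · rw [← aeval_def]
    have : (RatFunc.X - RatFunc.C α : RatFunc K) = algebraMap K[X] (RatFunc K) (X - C α) := by
      simp
    rw [this, aeval_algebraMap_apply, comp_eq_aeval]
  · simp

lemma evD_zero {K : Type*} [Field K] (c : K) (g : K →₀ K[X]) (hg : ∀ α, (g α).coeff 0 = 0)
    (h : evD c g = 0) : c = 0 ∧ g = 0 := by
  classical
  have hg0 : g = 0 := by
    by_contra hne
    obtain ⟨α0, hα0⟩ := Finsupp.support_nonempty_iff.2 hne
    set M : K[X] := ∏ α ∈ g.support, (X - C α) ^ (g α).natDegree with hM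
    have key : C c * M + ∑ α ∈ g.support, (g α).reverse.comp (X - C α) *
        ∏ β ∈ g.support.erase α, (X - C β) ^ (g β).natDegree = 0 := by
      apply RatFunc.algebraMap_injective K
      have : algebraMap K[X] (RatFunc K) M * evD c g = 0 := by rw [h, mul_zero]
      rw [map_zero, ← this, evD, Finsupp.sum, map_add, map_sum, mul_add, Finset.mul_sum]
      congr 1
      · simp [mul_comm]
      · refine Finset.sum_congr rfl fun α hα => ?_
        rw [aeval_mul_pow, hM, ← Finset.mul_prod_erase _ _ hα, map_mul, map_mul]
        have : algebraMap K[X] (RatFunc K) ((X - C α) ^ (g α).natDegree) ≠ 0 :=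
          RatFunc.algebraMap_ne_zero (pow_ne_zero _ (X_sub_C_ne_zero α))
        field_simp
    have hn : (g α0).natDegree ≠ 0 := by
      intro h0
      have := eq_C_of_natDegree_eq_zero h0
      rw [hg, C_0] at this
      exact (Finsupp.mem_support_iff.1 hα0) this
    have key2 := congrArg (eval α0) key
    rw [eval_add, eval_finsetSum, Finset.sum_eq_single α0, eval_mul, eval_zero, hM, eval_prod,
      Finset.prod_eq_zero hα0 (by simp [hn]), mul_zero, zero_add, eval_mul, eval_comp,
      eval_prod] at key2
    · rcases mul_eq_zero.1 key2 with h1 | h1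
      · have : (g α0).leadingCoeff = 0 := by
          rw [← h1]
          simp [← coeff_zero_eq_eval_zero]
        exact (Finsupp.mem_support_iff.1 hα0) (leadingCoeff_eq_zero.1 this)
      · rw [Finset.prod_eq_zero_iff] at h1
        obtain ⟨β, hβ, h2⟩ := h1
        rw [eval_pow, eval_sub, eval_X, eval_C] at h2
        have := eq_zero_of_pow_eq_zero h2
        exact (Finset.mem_erase.1 hβ).1 (sub_eq_zero.1 this).symm
    · intro β hβ hβα
      rw [eval_mul, eval_prod, Finset.prod_eq_zero (i := α0), mul_zero]
      · exact Finset.mem_erase.2 ⟨hβα.symm, hα0⟩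
      · simp [hn]
    · exact fun h => absurd hα0 h
  subst hg0
  refine ⟨?_, rfl⟩
  simpa [evD] using h

lemma evD_inj {K : Type*} [Field K] {c c' : K} {g g' : K →₀ K[X]}
    (hg : ∀ α, (g α).coeff 0 = 0) (hg' : ∀ α, (g' α).coeff 0 = 0)
    (h : evD c g = evD c' g') : c = c' ∧ g = g' := by
  have := evD_zero (c - c') (g - g') (by intro α; simp [hg, hg']) (by rw [evD_sub, h, sub_self])
  exact ⟨sub_eq_zero.1 this.1, sub_eq_zero.1 this.2⟩

lemma nzd {F K : Type*} [Field F] [Field K] (φ : F →+* K) :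
    nonZeroDivisors F[X] ≤ Submonoid.comap (mapRingHom φ) (nonZeroDivisors K[X]) := by
  intro x hx
  rw [Submonoid.mem_comap, mem_nonZeroDivisors_iff_ne_zero]
  rw [mem_nonZeroDivisors_iff_ne_zero] at hx
  simpa [Polynomial.map_eq_zero] using hx

noncomputable def bc {F K : Type*} [Field F] [Field K] (φ : F →+* K) : RatFunc F →+* RatFunc K :=
  RatFunc.mapRingHom (mapRingHom φ) (nzd φ)

lemma bc_eq {F K : Type*} [Field F] [Field K] (φ : F →+* K) (f : RatFunc F) :
    RatFunc.baseChange φ f = bc φ f := by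
  unfold bc
  rw [RatFunc.coe_mapRingHom_eq_coe_map, RatFunc.map_apply]
  rfl

lemma bc_inj {F K : Type*} [Field F] [Field K] (φ : F →+* K) : Function.Injective (bc φ) :=
  (bc φ).injective

lemma bc_poly {F K : Type*} [Field F] [Field K] (φ : F →+* K) (P : F[X]) :
    bc φ (algebraMap F[X] (RatFunc F) P) = algebraMap K[X] (RatFunc K) (P.map φ) := by
  unfold bc
  rw [RatFunc.coe_mapRingHom_eq_coe_map]
  have := RatFunc.map_apply_div (mapRingHom φ) (nzd φ) P 1
  simpa using this

lemma bc_X {F K : Type*} [Field F] [Field K] (φ : F →+* K) :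
    bc φ RatFunc.X = RatFunc.X := by
  rw [← RatFunc.algebraMap_X, bc_poly]; simp

lemma bc_C {F K : Type*} [Field F] [Field K] (φ : F →+* K) (a : F) :
    bc φ (RatFunc.C a) = RatFunc.C (φ a) := by
  rw [← RatFunc.algebraMap_C, bc_poly]; simp

lemma bc_comp {F K L : Type*} [Field F] [Field K] [Field L] (φ : F →+* K) (ψ : K →+* L)
    (f : RatFunc F) : bc ψ (bc φ f) = bc (ψ.comp φ) f := by
  rw [← RatFunc.num_div_denom f]
  simp only [map_div₀, bc_poly, Polynomial.map_map]

/-- Transport of data by an automorphism. -/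
noncomputable def tr {K : Type*} [Field K] (σ : K ≃+* K) (g : K →₀ K[X]) : K →₀ K[X] :=
  (g.mapRange (Polynomial.map (σ : K →+* K)) (Polynomial.map_zero _)).equivMapDomain σ.toEquiv

lemma tr_apply {K : Type*} [Field K] (σ : K ≃+* K) (g : K →₀ K[X]) (α : K) :
    tr σ g (σ α) = (g α).map (σ : K →+* K) := by
  simp [tr, Finsupp.equivMapDomain_apply]

lemma bc_evD {K : Type*} [Field K] (σ : K ≃+* K) (c : K) (g : K →₀ K[X]) :
    bc (σ : K →+* K) (evD c g) = evD (σ c) (tr σ g) := by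
  unfold evD tr
  rw [map_add, bc_C, Finsupp.sum_equivMapDomain, Finsupp.sum_mapRange_index (by intro; simp),
    map_finsuppSum]
  congr 1
  refine Finsupp.sum_congr fun α _ => ?_
  rw [aeval_def, hom_eval₂, aeval_def, eval₂_map]
  congr 1
  · ext a
    simp [RatFunc.algebraMap_eq_C, bc_C]
  · simp [bc_X, bc_C]

section Galois
set_option linter.unusedSectionVars false
variable {F K : Type*} [Field F] [Field K] [Algebra F K] [IsGalois F K]

lemma fixed_lift (P : K[X]) (h : ∀ σ : K ≃ₐ[F] K, P.map (σ : K →+* K) = P) :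
    ∃ Q : F[X], Q.map (algebraMap F K) = P := by
  rw [← mem_lifts, lifts_iff_coeff_lifts]
  intro n
  rw [InfiniteGalois.mem_range_algebraMap_iff_fixed]
  intro σ
  have := congrArg (fun Q => coeff Q n) (h σ)
  simpa using this

lemma descent (f : RatFunc K) (h : ∀ σ : K ≃ₐ[F] K, bc (σ : K →+* K) f = f) :
    ∃ f0 : RatFunc F, bc (algebraMap F K) f0 = f := by
  have hd : ∀ σ : K ≃ₐ[F] K, f.num.map (σ : K →+* K) = f.num ∧
      f.denom.map (σ : K →+* K) = f.denom := by
    intro σ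
    have h1 := h σ
    have hm : (f.denom.map (σ : K →+* K)).Monic := (RatFunc.monic_denom f).map _
    conv_lhs at h1 => rw [← RatFunc.num_div_denom f]
    rw [map_div₀, bc_poly, bc_poly] at h1
    conv_rhs at h1 => rw [← RatFunc.num_div_denom f]
    rw [div_eq_div_iff (RatFunc.algebraMap_ne_zero hm.ne_zero)
      (RatFunc.algebraMap_ne_zero f.denom_ne_zero), ← map_mul, ← map_mul] at h1
    have h2 := RatFunc.algebraMap_injective _ h1
    have hdvd : f.denom ∣ f.denom.map (σ : K →+* K) := by
      have : f.denom ∣ f.num * f.denom.map (σ : K →+* K) := ⟨_, by rw [← h2, mul_comm]⟩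
      exact (RatFunc.isCoprime_num_denom f).symm.dvd_of_dvd_mul_left this
    have h3 := eq_of_monic_of_dvd_of_natDegree_le (RatFunc.monic_denom f) hm hdvd
      natDegree_map_le
    rw [h3] at h2
    exact ⟨mul_right_cancel₀ f.denom_ne_zero h2, h3⟩
  obtain ⟨N, hN⟩ := fixed_lift f.num fun σ => (hd σ).1
  obtain ⟨D, hD⟩ := fixed_lift f.denom fun σ => (hd σ).2
  refine ⟨algebraMap _ _ N / algebraMap _ _ D, ?_⟩
  rw [map_div₀, bc_poly, bc_poly, hN, hD, RatFunc.num_div_denom]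

noncomputable def Bi {K : Type*} [Field K] (g : K →₀ K[X]) (i : ℕ) : Finset K :=
  g.support.filter fun α => (g α).natDegree + 1 = i

lemma mem_Bi {K : Type*} [Field K] (g : K →₀ K[X]) (i : ℕ) (α : K) :
    α ∈ Bi g i ↔ g α ≠ 0 ∧ (g α).natDegree + 1 = i := by
  simp [Bi]

def HasT {K : Type*} [Field K] (p : ℕ) (lam : Multiset ℕ) (g : K →₀ K[X]) : Prop :=
  (∀ α j, p ∣ j → (g α).coeff j = 0) ∧
    g.support.val.map (fun α => (g α).natDegree + 1) = lam

lemma HasT.card {K : Type*} [Field K] {p : ℕ} {lam : Multiset ℕ} {g : K →₀ K[X]}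
    (h : HasT p lam g) (i : ℕ) : (Bi g i).card = lam.count i := by
  classical
  rw [← h.2, Multiset.count_map, Bi, Finset.card_def, Finset.filter_val]
  congr 1
  exact Multiset.filter_congr fun x _ => eq_comm

lemma HasT.mem {K : Type*} [Field K] {p : ℕ} {lam : Multiset ℕ} {g : K →₀ K[X]}
    (h : HasT p lam g) (α : K) (hα : g α ≠ 0) : (g α).natDegree + 1 ∈ lam := by
  rw [← h.2]
  exact Multiset.mem_map_of_mem (fun α => (g α).natDegree + 1)
    (Finsupp.mem_support_iff.2 hα)

def Rep (p N : ℕ) (c0 : F) (D : ℕ → F[X]) (h : ℕ → ℕ → F[X]) (c : K) (g : K →₀ K[X]) : Prop :=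
  algebraMap F K c0 = c ∧
  (∀ i < N, (D i).map (algebraMap F K) = ∏ α ∈ Bi g i, (X - C α)) ∧
  ∀ i < N, ∀ j < i, ¬ p ∣ j → ∀ α ∈ Bi g i, aeval α (h i j) = (g α).coeff j

def Inv (F : Type*) {K : Type*} [Field F] [Field K] [Algebra F K] (c : K) (g : K →₀ K[X]) : Prop :=
  ∀ σ : K ≃ₐ[F] K, σ c = c ∧ ∀ α, g (σ α) = (g α).map (σ : K →+* K)

lemma inv_Bi {c : K} {g : K →₀ K[X]} (hI : Inv F c g) (σ : K ≃ₐ[F] K) (i : ℕ) (α : K) :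
    σ α ∈ Bi g i ↔ α ∈ Bi g i := by
  rw [mem_Bi, mem_Bi, (hI σ).2]
  rw [Polynomial.map_ne_zero_iff (σ : K →+* K).injective, natDegree_map]

lemma inv_image [DecidableEq K] {c : K} {g : K →₀ K[X]} (hI : Inv F c g) (σ : K ≃ₐ[F] K) (i : ℕ) :
    (Bi g i).image σ = Bi g i := by
  ext β
  rw [Finset.mem_image]
  constructor
  · rintro ⟨α, hα, rfl⟩
    exact (inv_Bi hI σ i α).2 hα
  · intro hβ
    refine ⟨σ.symm β, ?_, by simp⟩
    rw [← inv_Bi hI σ]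
    simpa using hβ

lemma lemA (p N : ℕ) {c : K} {g : K →₀ K[X]} (hI : Inv F c g) :
    ∃ (c0 : F) (D : ℕ → F[X]) (h : ℕ → ℕ → F[X]), Rep p N c0 D h c g ∧
      (∀ i, (D i).Monic ∧ (D i).natDegree = (Bi g i).card) ∧
      ∀ i j, (h i j).degree < (Bi g i).card := by
  classical
  obtain ⟨c0, hc0⟩ := (InfiniteGalois.mem_range_algebraMap_iff_fixed c).2 fun σ => (hI σ).1
  have hD : ∀ i, ∃ Q : F[X], Q.map (algebraMap F K) = ∏ α ∈ Bi g i, (X - C α) := by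
    intro i
    apply fixed_lift
    intro σ
    rw [Polynomial.map_prod]
    conv_rhs => rw [← inv_image hI σ i]
    rw [Finset.prod_image σ.injective.injOn]
    simp
  have hh : ∀ i j, ∃ Q : F[X], Q.map (algebraMap F K) =
      Lagrange.interpolate (Bi g i) id (fun α => (g α).coeff j) := by
    intro i j
    apply fixed_lift
    intro σ
    apply Lagrange.eq_interpolate_of_eval_eq _ Function.injective_id.injOn
    · refine lt_of_le_of_lt degree_map_le ?_
      exact Lagrange.degree_interpolate_lt _ Function.injective_id.injOn
    · intro β hβ
      rw [← inv_image hI σ i, Finset.mem_image] at hβ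
      obtain ⟨α, hα, rfl⟩ := hβ
      have : eval (id (σ α)) (Polynomial.map (σ : K →+* K)
        (Lagrange.interpolate (Bi g i) id (fun α => (g α).coeff j))) =
        (σ : K →+* K) (eval (id α) (Lagrange.interpolate (Bi g i) id (fun α => (g α).coeff j))) := by
        exact eval_map_apply (f := (σ : K →+* K)) α
      rw [this, Lagrange.eval_interpolate_at_node _ Function.injective_id.injOn hα, (hI σ).2,
        coeff_map]
  choose D hD using hD
  choose h hh using hh
  refine ⟨c0, D, h, ⟨hc0, fun i _ => hD i, ?_⟩, ?_, ?_⟩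
  · intro i _ j _ _ α hα
    rw [← eval_map_algebraMap, hh]
    exact Lagrange.eval_interpolate_at_node (v := id) _ Function.injective_id.injOn hα
  · intro i
    constructor
    · apply monic_of_injective (algebraMap F K).injective
      rw [hD]
      exact monic_prod_of_monic _ _ fun α _ => monic_X_sub_C α
    · rw [← natDegree_map (algebraMap F K), hD, natDegree_prod_of_monic _ _ fun α _ => monic_X_sub_C α]
      simp
  · intro i j
    rw [← degree_map _ (algebraMap F K), hh]
    exact Lagrange.degree_interpolate_lt _ Function.injective_id.injOn

lemma Rep.mem {p N : ℕ} {c0 : F} {D : ℕ → F[X]} {h : ℕ → ℕ → F[X]} {c : K} {g : K →₀ K[X]}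
    (hR : Rep p N c0 D h c g) {i : ℕ} (hi : i < N) (α : K) : aeval α (D i) = 0 ↔ α ∈ Bi g i := by
  rw [← eval_map_algebraMap, hR.2.1 i hi, eval_prod, Finset.prod_eq_zero_iff]
  simp [sub_eq_zero]

lemma lemB {p N : ℕ} {c0 : F} {D : ℕ → F[X]} {h : ℕ → ℕ → F[X]} {c c' : K} {g g' : K →₀ K[X]}
    {lam : Multiset ℕ} (hlam : ∀ i ∈ lam, i < N)
    (hR : Rep p N c0 D h c g) (hR' : Rep p N c0 D h c' g')
    (hg : HasT p lam g) (hg' : HasT p lam g') : c = c' ∧ g = g' := by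
  refine ⟨hR.1.symm.trans hR'.1, ?_⟩
  have main : ∀ g g' : K →₀ K[X], Rep p N c0 D h c g → Rep p N c0 D h c' g' → HasT p lam g →
      HasT p lam g' → ∀ α, g α ≠ 0 → g α = g' α := by
    intro g g' hR hR' hg hg' α hα
    have hi := hlam _ (hg.mem α hα)
    have h1 : α ∈ Bi g ((g α).natDegree + 1) := (mem_Bi _ _ _).2 ⟨hα, rfl⟩
    have h2 : α ∈ Bi g' ((g α).natDegree + 1) := (hR'.mem hi α).1 ((hR.mem hi α).2 h1)
    have h3 := ((mem_Bi _ _ _).1 h2).2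
    ext j
    by_cases hp : p ∣ j
    · rw [hg.1 _ _ hp, hg'.1 _ _ hp]
    by_cases hj : j < (g α).natDegree + 1
    · rw [← hR.2.2 _ hi j hj hp α h1, ← hR'.2.2 _ hi j hj hp α h2]
    · rw [coeff_eq_zero_of_natDegree_lt (by omega), coeff_eq_zero_of_natDegree_lt (by omega)]
  have hR2 : Rep p N c0 D h c g' := ⟨hR.1, hR'.2⟩
  have hR2' : Rep p N c0 D h c' g := ⟨hR'.1, hR.2⟩
  ext1 α
  by_cases h1 : g α = 0
  · by_cases h2 : g' α = 0
    · rw [h1, h2]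
    · exact (main g' g hR2 hR2' hg' hg α h2).symm
  · exact main g g' hR hR' hg hg' α h1

lemma lemC {p N : ℕ} {c0 c0' : F} {D D' : ℕ → F[X]} {h h' : ℕ → ℕ → F[X]} {c : K} {g : K →₀ K[X]}
    (hR : Rep p N c0 D h c g) (hR' : Rep p N c0' D' h' c g) :
    c0 = c0' ∧ (∀ i < N, D i = D' i) ∧ ∀ i < N, ∀ j < i, ¬ p ∣ j →
      (h i j).degree < (Bi g i).card → (h' i j).degree < (Bi g i).card → h i j = h' i j := by
  refine ⟨(algebraMap F K).injective (hR.1.trans hR'.1.symm), ?_, ?_⟩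
  · intro i hi
    exact map_injective _ (algebraMap F K).injective ((hR.2.1 i hi).trans (hR'.2.1 i hi).symm)
  · intro i hi j hj hp hd hd'
    apply map_injective _ (algebraMap F K).injective
    apply eq_of_degrees_lt_of_eval_finset_eq (Bi g i) (by rwa [degree_map]) (by rwa [degree_map])
    intro α hα
    rw [eval_map_algebraMap, eval_map_algebraMap, hR.2.2 i hi j hj hp α hα,
      hR'.2.2 i hi j hj hp α hα]

lemma lemD [IsAlgClosed K] {p N : ℕ} (c0 : F) (D : ℕ → F[X]) (h : ℕ → ℕ → F[X]) {lam : Multiset ℕ}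
    (hlam : ∀ i ∈ lam, i < N) (hD : ∀ i < N, (D i).Monic ∧ (D i).natDegree = lam.count i)
    (G1 : ∀ i < N, ∀ α : K, aeval α (D i) = 0 → aeval α (derivative (D i)) ≠ 0)
    (G2 : ∀ i < N, ∀ i' < N, i ≠ i' → ∀ α : K, aeval α (D i) = 0 → aeval α (D i') ≠ 0)
    (G3 : ∀ i < N, ∀ α : K, aeval α (D i) = 0 →
      2 ≤ i ∧ ¬ p ∣ (i - 1) ∧ aeval α (h i (i - 1)) ≠ 0) :
    ∃ (c : K) (g : K →₀ K[X]), Rep p N c0 D h c g ∧ HasT p lam g ∧ Inv F c g := by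
  classical
  set q : ℕ → K → K[X] := fun i α =>
    ∑ j ∈ (Finset.range i).filter (fun j => ¬ p ∣ j), monomial j (aeval α (h i j)) with hq
  set G : K → K[X] := fun α => ∑ i ∈ Finset.range N, if aeval α (D i) = 0 then q i α else 0 with hG
  have hG0 : ∀ α, G α ≠ 0 → ∃ i < N, aeval α (D i) = 0 := by
    intro α hα
    obtain ⟨i, hi, hi'⟩ := Finset.exists_ne_zero_of_sum_ne_zero hα
    refine ⟨i, Finset.mem_range.1 hi, ?_⟩
    by_contra h0
    rw [if_neg h0] at hi'
    exact hi' rfl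
  have hG1 : ∀ α, ∀ i < N, aeval α (D i) = 0 → G α = q i α := by
    intro α i hi h0
    rw [hG]
    simp only
    rw [Finset.sum_eq_single i, if_pos h0]
    · intro i' hi' hne
      rw [if_neg (G2 i hi i' (Finset.mem_range.1 hi') hne.symm α h0)]
    · intro h; exact absurd (Finset.mem_range.2 hi) h
  have hqc : ∀ i α j, (q i α).coeff j = if j < i ∧ ¬ p ∣ j then aeval α (h i j) else 0 := by
    intro i α j
    rw [hq]
    simp only [finsetSum_coeff, coeff_monomial]
    rw [Finset.sum_ite_eq']
    simp
  have hqd : ∀ i < N, ∀ α, aeval α (D i) = 0 → (q i α) ≠ 0 ∧ (q i α).natDegree + 1 = i := by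
    intro i hi α h0
    obtain ⟨h2, hp, hne⟩ := G3 i hi α h0
    have hc : (q i α).coeff (i - 1) ≠ 0 := by
      rw [hqc, if_pos ⟨by omega, hp⟩]; exact hne
    refine ⟨fun h => hc (by rw [h, coeff_zero]), ?_⟩
    have h3 : (q i α).natDegree ≤ i - 1 := by
      rw [natDegree_le_iff_coeff_eq_zero]
      intro j hj
      rw [hqc, if_neg (by omega)]
    have h4 := le_natDegree_of_ne_zero hc
    omega
  have hfin : ∀ α, G α ≠ 0 → α ∈ (Finset.range N).biUnion
      fun i => ((D i).map (algebraMap F K)).roots.toFinset := by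
    intro α hα
    obtain ⟨i, hi, h0⟩ := hG0 α hα
    rw [Finset.mem_biUnion]
    refine ⟨i, Finset.mem_range.2 hi, ?_⟩
    rw [Multiset.mem_toFinset, mem_roots ((hD i hi).1.map _).ne_zero, IsRoot.def,
      eval_map_algebraMap]
    exact h0
  set g : K →₀ K[X] := Finsupp.onFinset _ G hfin with hg
  have hgG : ∀ α, g α = G α := fun α => rfl
  have hB : ∀ i < N, ∀ α, α ∈ Bi g i ↔ aeval α (D i) = 0 := by
    intro i hi α
    rw [mem_Bi, hgG]
    constructor
    · rintro ⟨h1, h2⟩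
      obtain ⟨i', hi', h0⟩ := hG0 α h1
      rw [hG1 α i' hi' h0, (hqd i' hi' α h0).2] at h2
      rwa [← h2]
    · intro h0
      rw [hG1 α i hi h0]
      exact hqd i hi α h0
  have hroots : ∀ i < N, ((D i).map (algebraMap F K)).roots = (Bi g i).val := by
    intro i hi
    have hne := ((hD i hi).1.map (algebraMap F K)).ne_zero
    refine (Multiset.Nodup.ext ?_ (Bi g i).nodup).2 ?_
    · rw [Multiset.nodup_iff_count_le_one]
      intro α
      rw [count_roots]
      by_contra hlt
      rw [not_le, one_lt_rootMultiplicity_iff_isRoot hne] at hlt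
      obtain ⟨h1, h2⟩ := hlt
      rw [IsRoot.def, eval_map_algebraMap] at h1
      rw [IsRoot.def, derivative_map, eval_map_algebraMap] at h2
      exact G1 i hi α h1 h2
    · intro α
      rw [Finset.mem_val, hB i hi, mem_roots hne, IsRoot.def, eval_map_algebraMap]
  have hprod : ∀ i < N, (D i).map (algebraMap F K) = ∏ α ∈ Bi g i, (X - C α) := by
    intro i hi
    have := (IsAlgClosed.splits ((D i).map (algebraMap F K))).eq_prod_roots_of_monic
      ((hD i hi).1.map (algebraMap F K))
    rw [hroots i hi] at this
    exact this
  have hcoef : ∀ α j, p ∣ j → (g α).coeff j = 0 := by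
    intro α j hp
    by_cases h0 : G α = 0
    · rw [hgG, h0, coeff_zero]
    · obtain ⟨i, hi, h1⟩ := hG0 α h0
      rw [hgG, hG1 α i hi h1, hqc, if_neg (by tauto)]
  refine ⟨algebraMap F K c0, g, ⟨rfl, hprod, ?_⟩, ⟨hcoef, ?_⟩, ?_⟩
  · intro i hi j hj hp α hα
    rw [hgG, hG1 α i hi ((hB i hi α).1 hα), hqc, if_pos ⟨hj, hp⟩]
  · have hT : HasT p _ g := ⟨hcoef, rfl⟩
    ext i
    rw [← hT.card]
    by_cases hi : i < N
    · rw [← (hD i hi).2, ← natDegree_map (algebraMap F K), hprod i hi,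
        natDegree_prod_of_monic _ _ fun α _ => monic_X_sub_C α]
      simp
    · rw [Multiset.count_eq_zero_of_notMem fun h => hi (hlam i h), Finset.card_eq_zero,
        Finset.eq_empty_iff_forall_notMem]
      intro α hα
      obtain ⟨h1, h2⟩ := (mem_Bi _ _ _).1 hα
      obtain ⟨i', hi', h0⟩ := hG0 α h1
      rw [hgG, hG1 α i' hi' h0, (hqd i' hi' α h0).2] at h2
      omega
  · intro σ
    refine ⟨by simp, ?_⟩
    have haev : ∀ (α : K) (P : F[X]), aeval (σ α) P = σ (aeval α P) := by
      intro α P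
      exact aeval_algHom_apply σ α P
    intro α
    rw [hgG, hgG, hG]
    simp only [haev, Polynomial.map_sum]
    refine Finset.sum_congr rfl fun i _ => ?_
    simp only [map_eq_zero]
    split_ifs
    · rw [hq]; simp [haev, Polynomial.map_sum]
    · simp

def Sx (p N : ℕ) : Finset (ℕ × ℕ) :=
  (Finset.range N ×ˢ Finset.range N).filter fun x => x.2 < x.1 ∧ (x.2 = 0 ∨ ¬ p ∣ x.2)

lemma mem_Sx {p N : ℕ} (i j : ℕ) : (i, j) ∈ Sx p N ↔ i < N ∧ j < i ∧ (j = 0 ∨ ¬ p ∣ j) := by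
  simp only [Sx, Finset.mem_filter, Finset.mem_product, Finset.mem_range]
  constructor
  · rintro ⟨⟨h1, h2⟩, h3, h4⟩; exact ⟨h1, h3, h4⟩
  · rintro ⟨h1, h3, h4⟩; exact ⟨⟨h1, by omega⟩, h3, h4⟩

abbrev Vx (F : Type*) [Field F] (p N : ℕ) (k : ℕ → ℕ) :=
  F × ((x : Sx p N) → degreeLT F (k x.1.1))

noncomputable def gt {p N : ℕ} {k : ℕ → ℕ} (v : Vx F p N k) (i j : ℕ) : F[X] :=
  if h : (i, j) ∈ Sx p N then (v.2 ⟨(i, j), h⟩ : F[X]) else 0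

lemma gt_deg {p N : ℕ} {k : ℕ → ℕ} (v : Vx F p N k) (i j : ℕ) : (gt v i j).degree < k i := by
  unfold gt
  split_ifs with h
  · exact mem_degreeLT.1 (v.2 ⟨(i, j), h⟩).2
  · rw [degree_zero]; exact WithBot.bot_lt_coe _

noncomputable def Dv {p N : ℕ} {k : ℕ → ℕ} (v : Vx F p N k) (i : ℕ) : F[X] :=
  X ^ k i + gt v i 0

lemma Dv_monic {p N : ℕ} {k : ℕ → ℕ} (v : Vx F p N k) (i : ℕ) : (Dv v i).Monic :=
  monic_X_pow_add (gt_deg v i 0)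

lemma Dv_natDegree {p N : ℕ} {k : ℕ → ℕ} (v : Vx F p N k) (i : ℕ) : (Dv v i).natDegree = k i :=
  by
  have h := gt_deg v i 0
  rw [← degree_X_pow (R := F) (k i)] at h
  rw [Dv, natDegree_eq_of_degree_eq (degree_add_eq_left_of_degree_lt h), natDegree_X_pow]

lemma card_Vx [Finite F] (p N : ℕ) (k : ℕ → ℕ) :
    Nat.card (Vx F p N k) = Nat.card F ^ (1 + ∑ x ∈ Sx p N, k x.1) := by
  have h1 : ∀ n, Nat.card (degreeLT F n) = Nat.card F ^ n := by
    intro n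
    rw [Nat.card_congr (degreeLTEquiv F n).toEquiv, Nat.card_fun]
    simp
  rw [Nat.card_prod, Nat.card_pi, pow_add, pow_one, ← Finset.prod_pow_eq_pow_sum]
  simp only [h1]
  rw [Finset.prod_coe_sort (Sx p N) (fun x => Nat.card F ^ k x.1)]

instance [Finite F] (n : ℕ) : Finite (degreeLT F n) :=
  Finite.of_equiv _ (degreeLTEquiv F n).toEquiv.symm

lemma lemA' {p N : ℕ} (hp : 0 < p) {lam : Multiset ℕ} (h0 : 0 ∉ lam) {c : K} {g : K →₀ K[X]}
    (hI : Inv F c g) (hT : HasT p lam g) :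
    ∃ v : Vx F p N (fun i => lam.count i), Rep p N v.1 (Dv v) (gt v) c g := by
  obtain ⟨c0, D, h, hR, hD, hh⟩ := lemA p N hI
  have key : ∀ x : Sx p N, (if x.1.2 = 0 then D x.1.1 - X ^ (lam.count x.1.1) else h x.1.1 x.1.2) ∈
      degreeLT F (lam.count x.1.1) := by
    intro x
    rw [mem_degreeLT]
    split_ifs with h0
    · have h1 := hD x.1.1
      rw [hT.card] at h1
      have h2 : (D x.1.1).degree = lam.count x.1.1 := by
        rw [degree_eq_natDegree h1.1.ne_zero, h1.2]
      rw [← h2]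
      apply degree_sub_lt_left
      · rw [h2, degree_X_pow]
      · exact h1.1.ne_zero
      · rw [h1.1.leadingCoeff, leadingCoeff_X_pow]
    · rw [← hT.card]; exact hh _ _
  refine ⟨(c0, fun x => ⟨_, key x⟩), hR.1, ?_, ?_⟩
  · intro i hi
    rw [← hR.2.1 i hi]
    congr 1
    unfold Dv gt
    by_cases hi0 : i = 0
    · subst hi0
      rw [dif_neg (by rw [mem_Sx]; omega)]
      have h1 := hD 0
      rw [hT.card, Multiset.count_eq_zero_of_notMem h0] at h1
      simp only [Multiset.count_eq_zero_of_notMem h0, h1.1.natDegree_eq_zero.1 h1.2]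
      simp
    · rw [dif_pos ((mem_Sx i 0).2 ⟨hi, by omega, Or.inl rfl⟩)]
      simp
  · intro i hi j hj hpj α hα
    rw [← hR.2.2 i hi j hj hpj α hα]
    congr 1
    unfold gt
    rw [dif_pos ((mem_Sx i j).2 ⟨hi, hj, Or.inr hpj⟩)]
    simp only
    rw [if_neg]
    rintro rfl
    exact hpj (dvd_zero p)

def IsT (p : ℕ) (lam : Multiset ℕ) (K : Type*) [Field K] [Algebra F K] (f : RatFunc F) : Prop :=
  ∃ (c : K) (g : K →₀ K[X]), bc (algebraMap F K) f = evD c g ∧ HasT p lam g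

lemma inv_of {p : ℕ} {lam : Multiset ℕ} {f : RatFunc F} {c : K} {g : K →₀ K[X]}
    (hf : bc (algebraMap F K) f = evD c g) (hT : HasT p lam g) : Inv F c g := by
  intro σ
  have h1 := congrArg (bc ((σ : K ≃+* K) : K →+* K)) hf
  rw [bc_comp, bc_evD] at h1
  have h2 : ((σ : K ≃+* K) : K →+* K).comp (algebraMap F K) = algebraMap F K := by
    ext x; simp
  rw [h2, hf] at h1
  have hc : ∀ α, (g α).coeff 0 = 0 := fun α => hT.1 α 0 (dvd_zero p)
  have hc' : ∀ α, (tr (σ : K ≃+* K) g α).coeff 0 = 0 := by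
    intro α
    obtain ⟨β, rfl⟩ := (σ : K ≃+* K).surjective α
    rw [tr_apply, coeff_map, hc, map_zero]
  obtain ⟨e1, e2⟩ := evD_inj hc hc' h1
  refine ⟨e1.symm, fun α => ?_⟩
  have := tr_apply (σ : K ≃+* K) g α
  rw [← e2] at this
  exact this

lemma descent_ev {c : K} {g : K →₀ K[X]} (hI : Inv F c g) :
    ∃ f : RatFunc F, bc (algebraMap F K) f = evD c g := by
  apply descent
  intro σ
  have h1 := bc_evD (σ : K ≃+* K) c g
  have h2 : tr (σ : K ≃+* K) g = g := by
    ext1 α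
    obtain ⟨β, rfl⟩ := (σ : K ≃+* K).surjective α
    rw [tr_apply]
    exact ((hI σ).2 β).symm
  have h3 : (σ : K ≃+* K) c = c := (hI σ).1
  rw [h2, h3] at h1
  exact h1

lemma upper [Finite F] {p N : ℕ} (hp : 0 < p) {lam : Multiset ℕ} (hlam : ∀ i ∈ lam, i < N)
    (h0 : 0 ∉ lam) : Finite {f : RatFunc F // IsT p lam K f} ∧
      Nat.card {f : RatFunc F // IsT p lam K f} ≤
        Nat.card F ^ (1 + ∑ x ∈ Sx p N, lam.count x.1) := by
  have key : ∀ f : {f : RatFunc F // IsT p lam K f},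
      ∃ (v : Vx F p N (fun i => lam.count i)) (c : K) (g : K →₀ K[X]),
        bc (algebraMap F K) f.1 = evD c g ∧ HasT p lam g ∧ Rep p N v.1 (Dv v) (gt v) c g := by
    rintro ⟨f, c, g, hf, hT⟩
    obtain ⟨v, hv⟩ := lemA' hp h0 (inv_of hf hT) hT (N := N)
    exact ⟨v, c, g, hf, hT, hv⟩
  choose v c g hf hT hR using key
  have hinj : Function.Injective v := by
    intro f f' hff
    have h1 := hR f
    rw [hff] at h1
    obtain ⟨e1, e2⟩ := lemB hlam h1 (hR f') (hT f) (hT f')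
    apply Subtype.ext
    apply bc_inj (algebraMap F K)
    rw [hf, hf, e1, e2]
  refine ⟨Finite.of_injective v hinj, ?_⟩
  rw [← card_Vx p N (fun i => lam.count i)]
  exact Nat.card_le_card_of_injective v hinj

lemma lower [Finite F] [IsAlgClosed K] {p N : ℕ} (hp : 0 < p) {lam : Multiset ℕ}
    (hlam : ∀ i ∈ lam, i < N) (h0 : 0 ∉ lam) (good : Set (Vx F p N (fun i => lam.count i)))
    (G1 : ∀ v ∈ good, ∀ i < N, ∀ α : K, aeval α (Dv v i) = 0 → aeval α (derivative (Dv v i)) ≠ 0)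
    (G2 : ∀ v ∈ good, ∀ i < N, ∀ i' < N, i ≠ i' → ∀ α : K, aeval α (Dv v i) = 0 →
      aeval α (Dv v i') ≠ 0)
    (G3 : ∀ v ∈ good, ∀ i < N, ∀ α : K, aeval α (Dv v i) = 0 →
      2 ≤ i ∧ ¬ p ∣ (i - 1) ∧ aeval α (gt v i (i - 1)) ≠ 0) :
    good.ncard ≤ Nat.card {f : RatFunc F // IsT p lam K f} := by
  have key : ∀ v : good, ∃ (f : {f : RatFunc F // IsT p lam K f}) (c : K) (g : K →₀ K[X]),
        bc (algebraMap F K) f.1 = evD c g ∧ HasT p lam g ∧ Rep p N v.1.1 (Dv v.1) (gt v.1) c g := by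
    rintro ⟨v, hv⟩
    obtain ⟨c, g, hR, hT, hI⟩ := lemD v.1 (Dv v) (gt v) hlam
      (fun i _ => ⟨Dv_monic v i, Dv_natDegree v i⟩) (G1 v hv) (G2 v hv) (G3 v hv)
    obtain ⟨f, hf⟩ := descent_ev hI
    exact ⟨⟨f, c, g, hf, hT⟩, c, g, hf, hT, hR⟩
  choose f c g hf hT hR using key
  have hinj : Function.Injective f := by
    intro v v' hvv
    have h1 := hf v
    rw [hvv, hf v'] at h1
    obtain ⟨e1, e2⟩ := evD_inj (fun α => (hT v').1 α 0 (dvd_zero p))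
      (fun α => (hT v).1 α 0 (dvd_zero p)) h1
    have hR1 := hR v
    rw [← e1, ← e2] at hR1
    obtain ⟨u1, u2, u3⟩ := lemC hR1 (hR v')
    apply Subtype.ext
    refine Prod.ext u1 ?_
    funext x
    obtain ⟨⟨i, j⟩, hx⟩ := x
    have hx' := (mem_Sx i j).1 hx
    have : gt v.1 i j = gt v'.1 i j := by
      by_cases hj : j = 0
      · subst hj
        have := u2 i hx'.1
        unfold Dv at this
        exact add_left_cancel this
      · refine u3 i hx'.1 j hx'.2.1 (hx'.2.2.resolve_left hj) ?_ ?_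
        · rw [(hT v').card]; exact gt_deg _ _ _
        · rw [(hT v').card]; exact gt_deg _ _ _
    unfold gt at this
    rw [dif_pos hx, dif_pos hx] at this
    exact Subtype.ext this
  have := (upper (K := K) (F := F) hp hlam h0).1
  rw [← Nat.card_coe_set_eq]
  exact Nat.card_le_card_of_injective f hinj

lemma line_bound [Finite F] {V : Type*} [AddCommGroup V] [Module F V] [Finite V] (Bad : Set V)
    (w : V) (M : ℕ) (h : ∀ v : V, {t : F | v + t • w ∈ Bad}.ncard ≤ M) :
    Nat.card F * Bad.ncard ≤ M * Nat.card V := by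
  classical
  have := Fintype.ofFinite F
  have := Fintype.ofFinite V
  have h1 : ∑ v : V, ∑ t : F, (if v + t • w ∈ Bad then (1:ℕ) else 0) ≤ ∑ v : V, M := by
    refine Finset.sum_le_sum fun v _ => ?_
    refine le_trans (le_of_eq ?_) (h v)
    rw [Set.ncard_eq_toFinset_card', ← Finset.card_filter]
    congr 1
    ext t; simp
  rw [Finset.sum_comm] at h1
  have h2 : ∀ t : F, ∑ v : V, (if v + t • w ∈ Bad then (1:ℕ) else 0) = Bad.ncard := by
    intro t
    refine (Equiv.sum_comp (Equiv.addRight (t • w))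
      (fun v => if v ∈ Bad then (1:ℕ) else 0)).trans ?_
    rw [Set.ncard_eq_toFinset_card', ← Finset.card_filter]
    congr 1
    ext t; simp
  rw [Finset.sum_congr rfl fun t _ => h2 t] at h1
  simp only [Finset.sum_const, smul_eq_mul, Finset.card_univ] at h1
  rw [Nat.card_eq_fintype_card, Nat.card_eq_fintype_card]
  linarith

lemma root_bound [Finite F] {V : Type*} [AddCommGroup V] [Module F V] [Finite V] (P Q : V → F[X])
    (w : V) (M : ℕ) (hP : ∀ v (t : F), P (v + t • w) = P v + C t)
    (hQ : ∀ v (t : F), Q (v + t • w) = Q v) (hM : ∀ v, (Q v).natDegree ≤ M) :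
    Nat.card F * {v | Q v ≠ 0 ∧ ∃ α : K, aeval α (P v) = 0 ∧ aeval α (Q v) = 0}.ncard ≤
      M * Nat.card V := by
  classical
  apply line_bound _ w
  intro v
  refine le_trans ?_ (hM v)
  by_cases hQv : Q v = 0
  · have : {t : F | v + t • w ∈ {v | Q v ≠ 0 ∧ ∃ α : K, aeval α (P v) = 0 ∧ aeval α (Q v) = 0}}
        = ∅ := by
      ext t; simp [hQ, hQv]
    rw [this]; simp
  set R : Finset K := ((Q v).map (algebraMap F K)).roots.toFinset.image
    (fun α => - aeval α (P v)) with hR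
  have hcard : R.card ≤ (Q v).natDegree := by
    refine Finset.card_image_le.trans ((Multiset.toFinset_card_le _).trans ?_)
    exact (card_roots' _).trans natDegree_map_le
  refine le_trans ?_ hcard
  rw [← Set.ncard_coe_finset R]
  refine Set.ncard_le_ncard_of_injOn (algebraMap F K) ?_ (algebraMap F K).injective.injOn
    (Finset.finite_toSet _)
  rintro t ⟨-, α, h1, h2⟩
  rw [hP, map_add, aeval_C] at h1
  rw [hQ] at h2
  rw [Finset.mem_coe, hR, Finset.mem_image]
  refine ⟨α, ?_, ?_⟩
  · rw [Multiset.mem_toFinset, mem_roots (map_ne_zero hQv), IsRoot.def, eval_map_algebraMap, h2]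
  · exact neg_eq_of_add_eq_zero_right h1

noncomputable def dir {p N : ℕ} {k : ℕ → ℕ} (x : Sx p N) (e : F[X])
    (he : e ∈ degreeLT F (k x.1.1)) : Vx F p N k := (0, Pi.single x ⟨e, he⟩)

lemma gt_dir {p N : ℕ} {k : ℕ → ℕ} (x : Sx p N) (e : F[X]) (he : e ∈ degreeLT F (k x.1.1))
    (v : Vx F p N k) (t : F) (i j : ℕ) :
    gt (v + t • dir x e he) i j = gt v i j + if (i, j) = x.1 then t • e else 0 := by
  unfold gt dir
  by_cases h : (i, j) ∈ Sx p N
  · rw [dif_pos h, dif_pos h]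
    by_cases hx : (i, j) = x.1
    · obtain rfl : x = ⟨(i, j), h⟩ := Subtype.ext hx.symm
      simp
    · rw [if_neg hx]
      have : (⟨(i, j), h⟩ : Sx p N) ≠ x := fun h => hx (congrArg Subtype.val h)
      simp [Pi.single_eq_of_ne this]
  · rw [dif_neg h, dif_neg h, if_neg, add_zero]
    intro hx
    exact h (hx ▸ x.2)

lemma one_mem_deg {n : ℕ} (hn : 1 ≤ n) : (1 : F[X]) ∈ degreeLT F n := by
  rw [mem_degreeLT, degree_one]; exact_mod_cast hn

lemma X_mem_deg {n : ℕ} (hn : 2 ≤ n) : (X : F[X]) ∈ degreeLT F n := by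
  rw [mem_degreeLT, degree_X]; exact_mod_cast hn

/-- derivative vanishing -/
lemma bad1 [Finite F] {p N : ℕ} {k : ℕ → ℕ} {i : ℕ} (hi : i < N) (hi0 : 0 < i) (hk : 2 ≤ k i) :
    Nat.card F * {v : Vx F p N k | derivative (Dv v i) = 0}.ncard ≤ 1 * Nat.card (Vx F p N k) := by
  apply line_bound _ (dir ⟨(i, 0), (mem_Sx i 0).2 ⟨hi, hi0, Or.inl rfl⟩⟩ X (X_mem_deg hk))
  intro v
  rw [Set.ncard_le_one_iff]
  intro a b ha hb
  simp only [Set.mem_ofPred_eq, Dv, gt_dir, if_true] at ha hb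
  have h := ha.trans hb.symm
  simp only [derivative_add] at h
  have h2 := add_left_cancel (add_left_cancel h)
  simpa [derivative_monomial] using h2

lemma bad2 [Finite F] {p N : ℕ} {k : ℕ → ℕ} {i : ℕ} (hi : i < N) (hi0 : 0 < i) (hk : 1 ≤ k i) :
    Nat.card F * {v : Vx F p N k | derivative (Dv v i) ≠ 0 ∧
      ∃ α : K, aeval α (Dv v i) = 0 ∧ aeval α (derivative (Dv v i)) = 0}.ncard
        ≤ k i * Nat.card (Vx F p N k) := by
  have hD : ∀ (v : Vx F p N k) (t : F), Dv (v + t • dir ⟨(i, 0), (mem_Sx i 0).2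
      ⟨hi, hi0, Or.inl rfl⟩⟩ 1 (one_mem_deg hk)) i = Dv v i + C t := by
    intro v t
    simp only [Dv, gt_dir, if_true, smul_eq_C_mul, mul_one, add_assoc]
  apply root_bound (fun v => Dv v i) (fun v => derivative (Dv v i)) _ _ hD
  · intro v t
    simp only [hD, derivative_add, derivative_C, add_zero]
  · intro v
    refine (natDegree_derivative_le _).trans ?_
    rw [Dv_natDegree]; omega

lemma bad3 [Finite F] {p N : ℕ} {k : ℕ → ℕ} {i i' : ℕ} (hi : i < N) (hi0 : 0 < i) (hk : 1 ≤ k i)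
    (hne : i ≠ i') :
    Nat.card F * {v : Vx F p N k | 
      ∃ α : K, aeval α (Dv v i) = 0 ∧ aeval α (Dv v i') = 0}.ncard
        ≤ k i' * Nat.card (Vx F p N k) := by
  have := root_bound (F := F) (K := K) (fun v : Vx F p N k => Dv v i) (fun v => Dv v i')
    (dir ⟨(i, 0), (mem_Sx i 0).2 ⟨hi, hi0, Or.inl rfl⟩⟩ 1 (one_mem_deg hk)) (k i')
    (by
      intro v t
      simp only [Dv, gt_dir, if_true, smul_eq_C_mul, mul_one, add_assoc])
    (by
      intro v t
      simp [Dv, gt_dir, hne.symm])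
    (fun v => (Dv_natDegree v i').le)
  refine le_trans (le_of_eq ?_) this
  congr 2
  ext v
  simp [(Dv_monic v i').ne_zero]

lemma bad4 [Finite F] {p N : ℕ} {k : ℕ → ℕ} {i : ℕ} (hi : i < N) (hi0 : 2 ≤ i) (hk : 1 ≤ k i)
    (hp : ¬ p ∣ i - 1) :
    Nat.card F * {v : Vx F p N k | 
      ∃ α : K, aeval α (gt v i (i - 1)) = 0 ∧ aeval α (Dv v i) = 0}.ncard
        ≤ k i * Nat.card (Vx F p N k) := by
  have := root_bound (F := F) (K := K) (fun v : Vx F p N k => gt v i (i - 1)) (fun v => Dv v i)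
    (dir ⟨(i, i - 1), (mem_Sx i (i - 1)).2 ⟨hi, by omega, Or.inr hp⟩⟩ 1 (one_mem_deg hk)) (k i)
    (by
      intro v t
      simp only [gt_dir, if_true, smul_eq_C_mul, mul_one])
    (by
      intro v t
      have : (0 : ℕ) ≠ i - 1 := by omega
      simp [Dv, gt_dir, this])
    (fun v => (Dv_natDegree v i).le)
  refine le_trans (le_of_eq ?_) this
  congr 2
  ext v
  simp [(Dv_monic v i).ne_zero]

lemma lower2 [Finite F] [IsAlgClosed K] {p N M : ℕ} (hp : p.Prime) {lam : Multiset ℕ}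
    (hlam : ∀ i ∈ lam, i < N) (hl : ∀ i ∈ lam, 2 ≤ i ∧ i ≤ p) (hM : ∀ i, lam.count i ≤ M) :
    Nat.card F * Nat.card F ^ (1 + ∑ x ∈ Sx p N, lam.count x.1) ≤
      Nat.card F * Nat.card {f : RatFunc F // IsT p lam K f} +
      (N * N * (1 + M + M + M)) * Nat.card F ^ (1 + ∑ x ∈ Sx p N, lam.count x.1) := by
  classical
  set k : ℕ → ℕ := fun i => lam.count i with hk
  have hmem : ∀ i, 1 ≤ k i → i ∈ lam := fun i hi => Multiset.count_pos.1 hi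
  have hndvd : ∀ i, 1 ≤ k i → ¬ p ∣ i - 1 := by
    intro i hi hd
    have h1 := hl i (hmem i hi)
    have := Nat.le_of_dvd (by omega) hd
    omega
  set E1 : ℕ → Set (Vx F p N k) := fun i => {v | 2 ≤ k i ∧ derivative (Dv v i) = 0} with hE1
  set E2 : ℕ → Set (Vx F p N k) := fun i => {v | 1 ≤ k i ∧ derivative (Dv v i) ≠ 0 ∧
      ∃ α : K, aeval α (Dv v i) = 0 ∧ aeval α (derivative (Dv v i)) = 0} with hE2
  set E3 : ℕ → ℕ → Set (Vx F p N k) := fun i i' => {v | 1 ≤ k i ∧ i ≠ i' ∧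
      ∃ α : K, aeval α (Dv v i) = 0 ∧ aeval α (Dv v i') = 0} with hE3
  set E4 : ℕ → Set (Vx F p N k) := fun i => {v | 1 ≤ k i ∧
      ∃ α : K, aeval α (gt v i (i - 1)) = 0 ∧ aeval α (Dv v i) = 0} with hE4
  set E : ℕ × ℕ → Set (Vx F p N k) := fun x => E1 x.1 ∪ E2 x.1 ∪ E3 x.1 x.2 ∪ E4 x.1 with hE
  have hpos : ∀ i, 1 ≤ k i → 0 < i := fun i hi => by have := hl i (hmem i hi); omega
  have b1 : ∀ i < N, Nat.card F * (E1 i).ncard ≤ 1 * Nat.card (Vx F p N k) := by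
    intro i hi
    by_cases h : 2 ≤ k i
    · simp only [hE1, h, true_and]
      exact bad1 hi (hpos i (by omega)) h
    · simp [hE1, h]
  have b2 : ∀ i < N, Nat.card F * (E2 i).ncard ≤ M * Nat.card (Vx F p N k) := by
    intro i hi
    by_cases h : 1 ≤ k i
    · simp only [hE2, h, true_and]
      exact (bad2 hi (hpos i h) h).trans (Nat.mul_le_mul_right _ (hM i))
    · simp [hE2, h]
  have b3 : ∀ i < N, ∀ i', Nat.card F * (E3 i i').ncard ≤ M * Nat.card (Vx F p N k) := by
    intro i hi i'
    by_cases h : 1 ≤ k i ∧ i ≠ i'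
    · obtain ⟨ha, hb⟩ := h
      have hE : E3 i i' = {v | ∃ α : K, aeval α (Dv v i) = 0 ∧ aeval α (Dv v i') = 0} := by
        ext v; simp [hE3, ha, hb]
      rw [hE]
      exact (bad3 hi (hpos i ha) ha hb).trans (Nat.mul_le_mul_right _ (hM i'))
    · rw [not_and] at h
      by_cases h1 : 1 ≤ k i
      · simp [hE3, h h1]
      · simp [hE3, h1]
  have b4 : ∀ i < N, Nat.card F * (E4 i).ncard ≤ M * Nat.card (Vx F p N k) := by
    intro i hi
    by_cases h : 1 ≤ k i
    · simp only [hE4, h, true_and]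
      exact (bad4 hi (hl i (hmem i h)).1 h (hndvd i h)).trans (Nat.mul_le_mul_right _ (hM i))
    · simp [hE4, h]
  have bE : ∀ x ∈ Finset.range N ×ˢ Finset.range N,
      Nat.card F * (E x).ncard ≤ (1 + M + M + M) * Nat.card (Vx F p N k) := by
    rintro ⟨i, i'⟩ hx
    have hi : i < N := by simp at hx; exact hx.1
    have h1 : (E (i, i')).ncard ≤ (E1 i).ncard + (E2 i).ncard + (E3 i i').ncard + (E4 i).ncard := by
      refine (Set.ncard_union_le (E1 i ∪ E2 i ∪ E3 i i') (E4 i)).trans ?_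
      refine Nat.add_le_add_right ?_ _
      refine (Set.ncard_union_le (E1 i ∪ E2 i) (E3 i i')).trans ?_
      exact Nat.add_le_add_right (Set.ncard_union_le (E1 i) (E2 i)) _
    have := b1 i hi
    have := b2 i hi
    have := b3 i hi i'
    have := b4 i hi
    calc _ ≤ Nat.card F * ((E1 i).ncard + (E2 i).ncard + (E3 i i').ncard + (E4 i).ncard) := by gcongr
      _ ≤ _ := by linarith
  set bad : Set (Vx F p N k) := ⋃ x ∈ Finset.range N ×ˢ Finset.range N, E x with hbad
  have bB : Nat.card F * bad.ncard ≤ (N * N * (1 + M + M + M)) * Nat.card (Vx F p N k) := by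
    calc Nat.card F * bad.ncard ≤
        Nat.card F * ∑ x ∈ Finset.range N ×ˢ Finset.range N, (E x).ncard := by
          gcongr
          exact Finset.set_ncard_biUnion_le _ _
      _ ≤ ∑ x ∈ Finset.range N ×ˢ Finset.range N, (1 + M + M + M) * Nat.card (Vx F p N k) := by
          rw [Finset.mul_sum]
          exact Finset.sum_le_sum bE
      _ = _ := by
          rw [Finset.sum_const, Finset.card_product, Finset.card_range]; simp [mul_assoc]
  have hkpos : ∀ (v : Vx F p N k) i (α : K), aeval α (Dv v i) = 0 → 1 ≤ k i := by
    intro v i α h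
    by_contra h0
    have h1 : (Dv v i).natDegree = 0 := by rw [Dv_natDegree]; omega
    rw [(Dv_monic v i).natDegree_eq_zero.1 h1] at h
    simp at h
  have hnb : ∀ v ∈ badᶜ, ∀ i < N, ∀ i' < N, v ∉ E1 i ∧ v ∉ E2 i ∧ v ∉ E3 i i' ∧ v ∉ E4 i := by
    intro v hv i hi i' hi'
    have : v ∉ E (i, i') := by
      intro h
      apply hv
      rw [hbad]
      exact Set.mem_biUnion (x := (i, i')) (by simp [hi, hi']) h
    simp only [hE, Set.mem_union, not_or] at this
    tauto
  have hlow := lower (K := K) (F := F) hp.pos hlam (fun h => by have := hl 0 h; omega) badᶜ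
    (by
      intro v hv i hi α h0 h1
      have hk1 := hkpos v i α h0
      obtain ⟨n1, n2, -⟩ := hnb v hv i hi i hi
      by_cases hd : derivative (Dv v i) = 0
      · by_cases h2 : 2 ≤ k i
        · exact n1 ⟨h2, hd⟩
        · have hk1' : k i = 1 := by omega
          have h3 := (Dv_monic v i).coeff_natDegree
          rw [Dv_natDegree] at h3
          change (Dv v i).coeff (k i) = 1 at h3
          rw [hk1'] at h3
          have h4 := congrArg (fun P => coeff P 0) hd
          simp [coeff_derivative, h3] at h4
      · exact n2 ⟨hk1, hd, α, h0, h1⟩)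
    (by
      intro v hv i hi i' hi' hne α h0 h1
      exact (hnb v hv i hi i' hi').2.2.1 ⟨hkpos v i α h0, hne, α, h0, h1⟩)
    (by
      intro v hv i hi α h0
      have hk1 := hkpos v i α h0
      exact ⟨(hl i (hmem i hk1)).1, hndvd i hk1, fun h1 =>
        (hnb v hv i hi i hi).2.2.2 ⟨hk1, α, h1, h0⟩⟩)
  have hsum := Set.ncard_add_ncard_compl bad
  have hc := card_Vx (F := F) p N k
  rw [← hc]
  calc Nat.card F * Nat.card (Vx F p N k) = Nat.card F * badᶜ.ncard + Nat.card F * bad.ncard := by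
        rw [← hsum]; ring
    _ ≤ _ := by gcongr

end Galois

lemma IsT_unique {F K : Type*} [Field F] [Field K] [Algebra F K] {p : ℕ} {lam lam' : Multiset ℕ}
    {f : RatFunc F} (h : IsT p lam K f) (h' : IsT p lam' K f) : lam = lam' := by
  obtain ⟨c, g, hf, hT⟩ := h
  obtain ⟨c', g', hf', hT'⟩ := h'
  obtain ⟨-, rfl⟩ := evD_inj (fun α => hT.1 α 0 (dvd_zero p)) (fun α => hT'.1 α 0 (dvd_zero p))
    (hf.symm.trans hf')
  exact hT.2.symm.trans hT'.2

lemma adm_iff {F K : Type*} [Field F] [Field K] [Algebra F K] (p d r : ℕ) (f : RatFunc F) :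
    AdmissibleData p (RatFunc.baseChange (algebraMap F K) f) d r ↔
      ∃ lam : Nat.Partition (d + 2), Multiset.card lam.parts = r + 1 ∧ IsT p lam.parts K f := by
  classical
  rw [bc_eq]
  constructor
  · rintro ⟨c, B, fα, h1, -, h3, h4, h5, h6⟩
    set g : K →₀ K[X] := Finsupp.onFinset B (fun α => if α ∈ B then fα α else 0)
      (by intro α hα; by_contra h; simp [h] at hα) with hg
    have hgv : ∀ α ∈ B, g α = fα α := by
      intro α hα; simp [hg, hα]
    have hgs : g.support = B := by
      ext α
      rw [Finsupp.mem_support_iff]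
      by_cases hα : α ∈ B
      · simp [hgv α hα, h1 α hα, hα]
      · simp [hg, hα]
    have hm : g.support.val.map (fun α => (g α).natDegree + 1) =
        B.val.map (fun α => (fα α).natDegree + 1) := by
      rw [hgs]
      exact Multiset.map_congr rfl fun α hα => by rw [hgv α hα]
    refine ⟨⟨B.val.map (fun α => (fα α).natDegree + 1), ?_, h6.symm⟩, ?_, c, g, ?_, ?_, hm⟩
    · intro i hi
      rw [Multiset.mem_map] at hi
      obtain ⟨α, -, rfl⟩ := hi
      omega
    · simpa using h5
    · rw [h4, evD, Finsupp.sum, hgs]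
      congr 1
      exact Finset.sum_congr rfl fun α hα => by rw [hgv α hα]
    · intro α j hj
      by_cases hα : α ∈ B
      · rw [hgv α hα, h3 α hα j hj]
      · simp [hg, hα]
  · rintro ⟨lam, hc, c, g, hf, hT⟩
    refine ⟨c, g.support, g, fun α hα => Finsupp.mem_support_iff.1 hα,
      fun α _ => hT.1 α 0 (dvd_zero p), fun α _ j hj => hT.1 α j hj, hf, ?_, ?_⟩
    · rw [← hc, ← hT.2]; simp
    · rw [← lam.parts_sum, ← hT.2]; rfl

noncomputable def Tc (p : ℕ) (F : Type) [Field F] (lam : Multiset ℕ) : ℕ :=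
  Nat.card {f : RatFunc F // IsT p lam (AlgebraicClosure F) f}

lemma part_lt {n : ℕ} (lam : Nat.Partition n) : ∀ i ∈ lam.parts, i < n + 1 := by
  intro i hi
  have := Multiset.le_sum_of_mem hi
  rw [lam.parts_sum] at this
  omega

lemma part_zero {n : ℕ} (lam : Nat.Partition n) : 0 ∉ lam.parts := fun h =>
  absurd (lam.parts_pos h) (by omega)

lemma card_union {F : Type} [Field F] [Finite F] {p n : ℕ} (hp : 0 < p)
    (s : Finset (Nat.Partition n)) (Pr : RatFunc F → Prop)
    (hPr : ∀ f, Pr f ↔ ∃ lam ∈ s, IsT p lam.parts (AlgebraicClosure F) f) :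
    Nat.card {f : RatFunc F // Pr f} = ∑ lam ∈ s, Tc p F lam.parts := by
  have hfin : ∀ lam : s, Finite {f : RatFunc F // IsT p lam.1.parts (AlgebraicClosure F) f} :=
    fun lam => (upper hp (part_lt lam.1) (part_zero lam.1)).1
  unfold Tc
  rw [← Finset.sum_coe_sort s
    (fun lam => Nat.card {f : RatFunc F // IsT p lam.parts (AlgebraicClosure F) f}),
    ← Nat.card_sigma]
  symm
  refine Nat.card_eq_of_bijective (fun x => ⟨x.2.1, (hPr _).2 ⟨x.1.1, x.1.2, x.2.2⟩⟩) ⟨?_, ?_⟩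
  · rintro ⟨⟨l, hl⟩, f, hf⟩ ⟨⟨l', hl'⟩, f', hf'⟩ h
    simp only [Subtype.mk.injEq] at h
    subst h
    obtain rfl : l = l' := Nat.Partition.ext (IsT_unique hf hf')
    rfl
  · rintro ⟨f, hf⟩
    obtain ⟨l, hl, h⟩ := (hPr f).1 hf
    exact ⟨⟨⟨l, hl⟩, f, h⟩, rfl⟩

lemma expo (p N : ℕ) (k : ℕ → ℕ) : ∑ x ∈ Sx p N, k x.1 =
    ∑ i ∈ Finset.range N, k i * ((Finset.range i).filter fun j => j = 0 ∨ ¬ p ∣ j).card := by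
  have h : Sx p N = (Finset.range N).biUnion fun i =>
      ((Finset.range i).filter fun j => j = 0 ∨ ¬ p ∣ j).image (fun j => (i, j)) := by
    ext ⟨i, j⟩
    rw [mem_Sx]
    simp only [Finset.mem_biUnion, Finset.mem_image, Finset.mem_filter, Finset.mem_range,
      Prod.mk.injEq]
    constructor
    · rintro ⟨h1, h2, h3⟩
      exact ⟨i, h1, j, ⟨h2, h3⟩, rfl, rfl⟩
    · rintro ⟨i', h1, j', ⟨h2, h3⟩, rfl, rfl⟩
      exact ⟨h1, h2, h3⟩
  rw [h, Finset.sum_biUnion]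
  · refine Finset.sum_congr rfl fun i _ => ?_
    rw [Finset.sum_image (by intro a _ b _ hab; simpa using hab)]
    simp [mul_comm]
  · intro i _ i' _ hne
    simp only [Function.onFun]
    rw [Finset.disjoint_left]
    rintro ⟨a, b⟩ h1 h2
    simp only [Finset.mem_image, Prod.mk.injEq] at h1 h2
    obtain ⟨_, _, rfl, _⟩ := h1
    obtain ⟨_, _, h3, _⟩ := h2
    exact hne h3.symm

lemma sum_count {N : ℕ} {lam : Multiset ℕ} (hlam : ∀ i ∈ lam, i < N) :
    ∑ i ∈ Finset.range N, lam.count i * i = lam.sum := by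
  rw [Finset.sum_multiset_count_of_subset lam (Finset.range N)]
  · simp
  · intro i hi
    rw [Multiset.mem_toFinset] at hi
    exact Finset.mem_range.2 (hlam i hi)

lemma expo_good {p N : ℕ} {lam : Multiset ℕ} (hlam : ∀ i ∈ lam, i < N)
    (hl : ∀ i ∈ lam, 2 ≤ i ∧ i ≤ p) : ∑ x ∈ Sx p N, lam.count x.1 = lam.sum := by
  rw [expo p N (fun i => lam.count i), ← sum_count hlam]
  refine Finset.sum_congr rfl fun i _ => ?_
  by_cases hi : i ∈ lam
  · congr 1
    rw [Finset.filter_true_of_mem, Finset.card_range]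
    intro j hj
    rw [Finset.mem_range] at hj
    by_cases hj0 : j = 0
    · exact Or.inl hj0
    · right
      intro hd
      have := Nat.le_of_dvd (by omega) hd
      have := hl i hi
      omega
  · simp [Multiset.count_eq_zero_of_notMem hi]

lemma expo_bad {p N : ℕ} (hp : 0 < p) {lam : Multiset ℕ} (hlam : ∀ i ∈ lam, i < N)
    (i0 : ℕ) (hi0 : i0 ∈ lam) (hpi : p < i0) : ∑ x ∈ Sx p N, lam.count x.1 < lam.sum := by
  rw [expo p N (fun i => lam.count i), ← sum_count hlam]
  refine Finset.sum_lt_sum (fun i _ => ?_) ⟨i0, Finset.mem_range.2 (hlam _ hi0), ?_⟩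
  · gcongr
    refine (Finset.card_filter_le _ _).trans ?_
    simp
  · have := Multiset.count_pos.2 hi0
    gcongr
    conv_rhs => rw [← Finset.card_range i0]
    apply Finset.card_lt_card
    rw [Finset.filter_ssubset]
    refine ⟨p, Finset.mem_range.2 hpi, ?_⟩
    simp; omega

lemma Tc_bad {F : Type} [Field F] [Finite F] {p d : ℕ} (hp : p.Prime) (lam : Nat.Partition (d + 2))
    (hl : ¬ ∀ i ∈ lam.parts, 2 ≤ i ∧ i ≤ p) : Tc p F lam.parts ≤ Nat.card F ^ (d + 2) := by
  by_cases h1 : 1 ∈ lam.parts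
  · have : IsEmpty {f : RatFunc F // IsT p lam.parts (AlgebraicClosure F) f} := by
      constructor
      rintro ⟨f, c, g, -, hT⟩
      rw [← hT.2, Multiset.mem_map] at h1
      obtain ⟨α, hα, hd⟩ := h1
      have h2 := eq_C_of_natDegree_eq_zero (p := g α) (by omega)
      rw [hT.1 α 0 (dvd_zero p), C_0] at h2
      exact Finsupp.mem_support_iff.1 hα h2
    unfold Tc
    rw [Nat.card_of_isEmpty]; exact Nat.zero_le _
  · push Not at hl
    obtain ⟨i, hi, h2⟩ := hl
    have hi1 : i ≠ 1 := fun h => h1 (h ▸ hi)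
    have hi0 := lam.parts_pos hi
    have := expo_bad (N := d + 3) hp.pos (part_lt lam) i hi (h2 (by omega))
    rw [lam.parts_sum] at this
    refine (upper (N := d + 3) hp.pos (part_lt lam) (part_zero lam)).2.trans ?_
    apply Nat.pow_le_pow_right Nat.card_pos
    omega

lemma Tc_good {F : Type} [Field F] [Finite F] {p d : ℕ} (hp : p.Prime) (lam : Nat.Partition (d + 2))
    (hl : ∀ i ∈ lam.parts, 2 ≤ i ∧ i ≤ p) : Tc p F lam.parts ≤ Nat.card F ^ (d + 3) ∧
    Nat.card F * Nat.card F ^ (d + 3) ≤ Nat.card F * Tc p F lam.parts +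
      ((d + 3) * (d + 3) * (1 + (d + 2) + (d + 2) + (d + 2))) * Nat.card F ^ (d + 3) := by
  have he := expo_good (part_lt lam) hl
  rw [lam.parts_sum] at he
  have h1 := (upper (F := F) (K := AlgebraicClosure F) hp.pos (part_lt lam) (part_zero lam)).2
  have h2 := lower2 (F := F) (K := AlgebraicClosure F) (M := d + 2) hp (part_lt lam) hl (by
    intro i
    by_cases hi : i ∈ lam.parts
    · have h3 := sum_count (part_lt lam)
      rw [lam.parts_sum] at h3
      have h4 := Finset.single_le_sum (f := fun i => lam.parts.count i * i) (fun _ _ => Nat.zero_le _)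
        (Finset.mem_range.2 (part_lt lam i hi))
      rw [h3] at h4
      exact le_trans (Nat.le_mul_of_pos_right _ (lam.parts_pos hi)) h4
    · rw [Multiset.count_eq_zero_of_notMem hi]; omega)
  have e : 1 + (d + 2) = d + 3 := by omega
  rw [he, e] at h1
  rw [he, ← e] at h2
  rw [← e]
  exact ⟨by rw [e]; exact h1, h2⟩

lemma tendsto_Tc (p : ℕ) [Fact p.Prime] (d : ℕ) (lam : Nat.Partition (d + 2)) 
    [Decidable (∀ i ∈ lam.parts, 2 ≤ i ∧ i ≤ p)] :
    Filter.Tendsto (fun n : ℕ => (Tc p (GaloisField p (n + 1)) lam.parts : ℝ) /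
      (Nat.card (GaloisField p (n + 1)) : ℝ) ^ (d + 3)) Filter.atTop
      (nhds (if ∀ i ∈ lam.parts, 2 ≤ i ∧ i ≤ p then 1 else 0)) := by
  have hp : p.Prime := Fact.out
  have hqt : Filter.Tendsto (fun n : ℕ => ((Nat.card (GaloisField p (n + 1)) : ℝ))⁻¹)
      Filter.atTop (nhds 0) := by
    apply Filter.Tendsto.inv_tendsto_atTop
    have h1 : ∀ n : ℕ, (Nat.card (GaloisField p (n + 1)) : ℝ) = (p : ℝ) ^ (n + 1) := by
      intro n
      rw [GaloisField.card p (n + 1) (by omega)]; push_cast; rfl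
    simp only [h1]
    exact (tendsto_pow_atTop_atTop_of_one_lt (by exact_mod_cast hp.one_lt)).comp
      (Filter.tendsto_add_atTop_nat 1)
  have hq0 : ∀ n : ℕ, (0 : ℝ) < Nat.card (GaloisField p (n + 1)) := by
    intro n
    exact_mod_cast Nat.card_pos
  split_ifs with hl
  · set Cc : ℝ := ((d + 3) * (d + 3) * (1 + (d + 2) + (d + 2) + (d + 2)) : ℝ) with hC
    refine tendsto_of_tendsto_of_tendsto_of_le_of_le
      (g := fun n : ℕ => 1 - Cc * ((Nat.card (GaloisField p (n + 1)) : ℝ))⁻¹) (h := fun _ => 1)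
      ?_ tendsto_const_nhds ?_ ?_
    · simpa using (hqt.const_mul Cc).const_sub 1
    · intro n
      have h2 := (Tc_good (F := GaloisField p (n + 1)) hp lam hl).2
      have h3 : (Nat.card (GaloisField p (n + 1)) : ℝ) * (Nat.card (GaloisField p (n + 1)) : ℝ) ^ (d + 3)
        ≤ (Nat.card (GaloisField p (n + 1)) : ℝ) * Tc p (GaloisField p (n + 1)) lam.parts +
          Cc * (Nat.card (GaloisField p (n + 1)) : ℝ) ^ (d + 3) := by
        rw [hC]; exact_mod_cast h2
      have hq := hq0 n
      have hqd := pow_pos hq (d + 3)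
      simp only
      rw [le_div_iff₀ hqd]
      have : (1 - Cc * ((Nat.card (GaloisField p (n + 1)) : ℝ))⁻¹) *
          (Nat.card (GaloisField p (n + 1)) : ℝ) ^ (d + 3) =
          ((Nat.card (GaloisField p (n + 1)) : ℝ) * (Nat.card (GaloisField p (n + 1)) : ℝ) ^ (d + 3) -
          Cc * (Nat.card (GaloisField p (n + 1)) : ℝ) ^ (d + 3)) /
          (Nat.card (GaloisField p (n + 1)) : ℝ) := by
        field_simp
      rw [this, div_le_iff₀ hq]
      linarith
    · intro n
      have h2 := (Tc_good (F := GaloisField p (n + 1)) hp lam hl).1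
      simp only
      rw [div_le_one (pow_pos (hq0 n) _)]
      exact_mod_cast h2
  · refine tendsto_of_tendsto_of_tendsto_of_le_of_le tendsto_const_nhds hqt ?_ ?_
    · intro n
      have := hq0 n
      simp only
      positivity
    · intro n
      have h2 := Tc_bad (F := GaloisField p (n + 1)) hp lam hl
      have h3 : (Tc p (GaloisField p (n + 1)) lam.parts : ℝ) ≤
        (Nat.card (GaloisField p (n + 1)) : ℝ) ^ (d + 2) := by exact_mod_cast h2
      simp only
      rw [div_le_iff₀ (pow_pos (hq0 n) _), pow_succ _ (d + 2), mul_comm (_ ^ (d + 2)),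
        inv_mul_cancel_left₀ (hq0 n).ne']
      exact h3

lemma part_bound {p d : ℕ} (lam : Nat.Partition (d + 2)) (hl : ∀ i ∈ lam.parts, 2 ≤ i ∧ i ≤ p) :
    ∃ r < d / 2 + 1, Multiset.card lam.parts = r + 1 := by
  have h1 : Multiset.card lam.parts ≠ 0 := by
    intro h
    have h2 := lam.parts_sum
    rw [Multiset.card_eq_zero.1 h] at h2
    simp at h2
  have h2 : Multiset.card lam.parts • 2 ≤ lam.parts.sum :=
    Multiset.card_nsmul_le_sum fun i hi => (hl i hi).1
  rw [lam.parts_sum, smul_eq_mul] at h2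
  exact ⟨Multiset.card lam.parts - 1, by omega, by omega⟩

lemma MpTotal_eq (p d : ℕ) : MpTotal p d =
    (Finset.univ.filter (fun P : Nat.Partition (d + 2) => ∀ i ∈ P.parts, 2 ≤ i ∧ i ≤ p)).card := by
  classical
  unfold MpTotal Mp
  rw [← Finset.card_biUnion]
  · congr 1
    ext P
    simp only [Finset.mem_biUnion, Finset.mem_filter, Finset.mem_univ, true_and, Finset.mem_range]
    constructor
    · rintro ⟨r, -, -, h⟩; exact h
    · intro h
      obtain ⟨r, hr, h1⟩ := part_bound P h
      exact ⟨r, hr, h1, h⟩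
  · intro r _ r' _ hne
    rw [Function.onFun, Finset.disjoint_left]
    intro P h1 h2
    simp only [Finset.mem_filter] at h1 h2
    omega

lemma MpTotal_pos {p d : ℕ} (hp : p.Prime) (h2 : p = 2 → Even d) : 0 < MpTotal p d := by
  rw [MpTotal_eq, Finset.card_pos]
  by_cases he : Even d
  · obtain ⟨m, rfl⟩ := he
    refine ⟨⟨Multiset.replicate (m + 1) 2, ?_, ?_⟩, ?_⟩
    · intro i hi; rw [Multiset.eq_of_mem_replicate hi]; omega
    · rw [Multiset.sum_replicate, smul_eq_mul]; omega
    · simp only [Finset.mem_filter, Finset.mem_univ, true_and]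
      intro i hi
      rw [Multiset.eq_of_mem_replicate hi]
      exact ⟨le_rfl, hp.two_le⟩
  · have hp3 : 3 ≤ p := by
      have := hp.two_le
      have : p ≠ 2 := fun h => he (h2 h)
      omega
    obtain ⟨m, rfl⟩ := Nat.not_even_iff_odd.1 he
    refine ⟨⟨3 ::ₘ Multiset.replicate m 2, ?_, ?_⟩, ?_⟩
    · intro i hi
      rcases Multiset.mem_cons.1 hi with rfl | hi
      · omega
      · rw [Multiset.eq_of_mem_replicate hi]; omega
    · rw [Multiset.sum_cons, Multiset.sum_replicate, smul_eq_mul]; omega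
    · simp only [Finset.mem_filter, Finset.mem_univ, true_and]
      intro i hi
      rcases Multiset.mem_cons.1 hi with rfl | hi
      · omega
      · rw [Multiset.eq_of_mem_replicate hi]; omega

end ASP

/-- **Geometric problem** (Theorem `main`): for a fixed prime `p`, `d > 0` (with `d` even
when `p = 2`) and `r ≤ ⌊d/2⌋`, the proportion of admissible rational functions over `F_q`
of genus `g = d(p-1)/2` whose Artin–Schreier cover has `p`-rank `τ = r(p-1)` tends to
`M_p(r+1, d+2) / M_p(d+2)` as `q = p^n → ∞`. -/
theorem geometric_p_rank_statistics (p : ℕ) [Fact p.Prime] (d r : ℕ)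
    (hd : 0 < d) (hr : r ≤ d / 2) (h2 : p = 2 → Even d) :
    Filter.Tendsto
      (fun n : ℕ =>
        (SCount p d r (GaloisField p (n + 1)) : ℝ) / (STotal p d (GaloisField p (n + 1))))
      Filter.atTop (nhds ((Mp p d r : ℝ) / (MpTotal p d))) := by
  classical
  have hp : p.Prime := Fact.out
  have hS : ∀ n : ℕ, SCount p d r (GaloisField p (n + 1)) =
      ∑ lam ∈ Finset.univ.filter (fun P : Nat.Partition (d + 2) => Multiset.card P.parts = r + 1),
        ASP.Tc p (GaloisField p (n + 1)) lam.parts := by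
    intro n
    apply ASP.card_union hp.pos
    intro f
    rw [ASP.adm_iff]
    simp
  have hT : ∀ n : ℕ, STotal p d (GaloisField p (n + 1)) =
      ∑ lam : Nat.Partition (d + 2), ASP.Tc p (GaloisField p (n + 1)) lam.parts := by
    intro n
    apply ASP.card_union hp.pos
    intro f
    simp only [ASP.adm_iff, Finset.mem_univ, true_and]
    constructor
    · rintro ⟨r, lam, -, h⟩
      exact ⟨lam, h⟩
    · rintro ⟨lam, h⟩
      refine ⟨Multiset.card lam.parts - 1, lam, ?_, h⟩
      have h1 : Multiset.card lam.parts ≠ 0 := by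
        intro h
        have h2 := lam.parts_sum
        rw [Multiset.card_eq_zero.1 h] at h2
        simp at h2
      omega
  have key : ∀ s : Finset (Nat.Partition (d + 2)), Filter.Tendsto (fun n : ℕ =>
      ((∑ lam ∈ s, ASP.Tc p (GaloisField p (n + 1)) lam.parts : ℕ) : ℝ) /
        (Nat.card (GaloisField p (n + 1)) : ℝ) ^ (d + 3)) Filter.atTop
      (nhds ((s.filter fun P : Nat.Partition (d + 2) =>
        ∀ i ∈ P.parts, 2 ≤ i ∧ i ≤ p).card : ℝ)) := by
    intro s
    have h := tendsto_finsetSum s fun lam _ => ASP.tendsto_Tc p d lam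
    rw [Finset.sum_boole] at h
    refine h.congr fun n => ?_
    push_cast
    rw [Finset.sum_div]
  have k1 := key (Finset.univ.filter
    (fun P : Nat.Partition (d + 2) => Multiset.card P.parts = r + 1))
  have k2 := key Finset.univ
  rw [Finset.filter_filter] at k1
  have e1 : Mp p d r = (Finset.univ.filter (fun P : Nat.Partition (d + 2) =>
      Multiset.card P.parts = r + 1 ∧ ∀ i ∈ P.parts, 2 ≤ i ∧ i ≤ p)).card := by
    unfold Mp
    congr
  have e2 : MpTotal p d = (Finset.univ.filter (fun P : Nat.Partition (d + 2) =>
      ∀ i ∈ P.parts, 2 ≤ i ∧ i ≤ p)).card := by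
    rw [ASP.MpTotal_eq]
  have hpos := ASP.MpTotal_pos hp h2
  rw [← e1] at k1
  rw [← e2] at k2
  refine (k1.div k2 (by exact_mod_cast hpos.ne')).congr fun n => ?_
  have hq : (Nat.card (GaloisField p (n + 1)) : ℝ) ^ (d + 3) ≠ 0 := by
    apply pow_ne_zero
    exact_mod_cast Nat.card_pos.ne'
  rw [hS, hT]
  simp only [Pi.div_apply]
  rw [div_div_div_cancel_right₀ hq]
end

section
/- Fix integers d > 0 and r with 0 ≤ r ≤ ⌊d/2⌋. As the prime p → ∞, with g = d(p-1)/2 and τ = r(p-1), the proportion of admissible rational functions over F_p of genus g whose Artin–Schreier cover has p-rank τ converges to T(r+1, d+2)/T(d+2). -/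
open Polynomial

/-- `T(r+1, d+2)`: the number of partitions of `d+2` into exactly `r+1` parts, each `≥ 2`. -/
def T (d r : ℕ) : ℕ :=
  (Finset.univ.filter (fun P : Nat.Partition (d + 2) =>
      Multiset.card P.parts = r + 1 ∧ ∀ i ∈ P.parts, 2 ≤ i)).card

/-- `T(d+2) = Σ_{r=0}^{⌊d/2⌋} T(r+1, d+2)`. -/
def TTotal (d : ℕ) : ℕ := ∑ r ∈ Finset.range (d / 2 + 1), T d r


lemma num_denom_of_coprime {K : Type*} [Field K] {N D : K[X]} (h : IsCoprime N D) (hD : D.Monic) :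
    RatFunc.num (algebraMap K[X] (RatFunc K) N / algebraMap K[X] (RatFunc K) D) = N ∧
    RatFunc.denom (algebraMap K[X] (RatFunc K) N / algebraMap K[X] (RatFunc K) D) = D := by
  set x := algebraMap K[X] (RatFunc K) N / algebraMap K[X] (RatFunc K) D with hx
  have h1 : x.num * D = N * x.denom := (RatFunc.num_mul_eq_mul_denom_iff hD.ne_zero).2 hx
  have h2 : x.denom ∣ D := (RatFunc.denom_dvd hD.ne_zero).2 ⟨N, hx⟩
  have h3 : D ∣ x.denom := h.symm.dvd_of_dvd_mul_left (h1 ▸ Dvd.intro_left _ rfl)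
  have h4 : x.denom = D :=
    eq_of_monic_of_associated (RatFunc.monic_denom x) hD (associated_of_dvd_dvd h2 h3)
  refine ⟨?_, h4⟩
  rw [h4] at h1
  exact mul_right_cancel₀ hD.ne_zero h1

lemma num_denom_baseChange {F K : Type*} [Field F] [Field K] (φ : F →+* K) (f : RatFunc F) :
    (RatFunc.baseChange φ f).num = f.num.map φ ∧ (RatFunc.baseChange φ f).denom = f.denom.map φ := by
  apply num_denom_of_coprime
  · have := (RatFunc.isCoprime_num_denom f).map (Polynomial.mapRingHom φ)
    simpa using this
  · exact (RatFunc.monic_denom f).map φ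

lemma XsubC_ne {K : Type*} [Field K] (α : K) : (RatFunc.X - RatFunc.C α : RatFunc K) ≠ 0 := by
  have : (RatFunc.X - RatFunc.C α : RatFunc K) = algebraMap K[X] (RatFunc K) (X - C α) := by
    simp
  rw [this]
  exact RatFunc.algebraMap_ne_zero (X_sub_C_ne_zero α)

lemma aeval_inv_eq {K : Type*} [Field K] (α : K) (f : K[X]) :
    aeval ((RatFunc.X - RatFunc.C α : RatFunc K)⁻¹) f =
      algebraMap K[X] (RatFunc K) (f.reverse.comp (X - C α)) /
      algebraMap K[X] (RatFunc K) ((X - C α) ^ f.natDegree) := by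
  have hne := XsubC_ne α
  let _ : Invertible ((RatFunc.X - RatFunc.C α : RatFunc K)⁻¹) := invertibleOfNonzero (inv_ne_zero hne)
  have h := eval₂_reverse_mul_pow (algebraMap K (RatFunc K)) ((RatFunc.X - RatFunc.C α : RatFunc K)⁻¹) f
  rw [aeval_def, ← h, invOf_eq_inv, inv_inv, inv_pow, div_eq_mul_inv]
  congr 1
  · rw [comp, hom_eval₂]
    congr 1
    simp
  · simp

/-- pole computation -/
lemma pf_coprime {K : Type*} [Field K] (c : K) (B : Finset K) (fα : K → K[X])
    (h0 : ∀ α ∈ B, fα α ≠ 0) (h1 : ∀ α ∈ B, (fα α).coeff 0 = 0) :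
    (RatFunc.C c + ∑ α ∈ B, Polynomial.aeval ((RatFunc.X - RatFunc.C α)⁻¹) (fα α) : RatFunc K).denom
      = ∏ α ∈ B, (X - C α) ^ (fα α).natDegree := by
  classical
  set D : K[X] := ∏ α ∈ B, (X - C α) ^ (fα α).natDegree with hD
  have hDm : D.Monic := monic_prod_of_monic _ _ fun α _ => (monic_X_sub_C α).pow _
  set N : K[X] := C c * D + ∑ α ∈ B, (fα α).reverse.comp (X - C α) *
    ∏ β ∈ B.erase α, (X - C β) ^ (fα β).natDegree with hN
  have hdeg : ∀ α ∈ B, (fα α).natDegree ≠ 0 := by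
    intro α hα h
    apply h0 α hα
    rw [eq_C_of_natDegree_eq_zero h, h1 α hα, C_0]
  have hcop : IsCoprime N D := by
    rw [hD]
    refine IsCoprime.prod_right fun α hα => IsCoprime.pow_right ?_
    rw [isCoprime_comm, (irreducible_X_sub_C α).isCoprime_or_dvd N |>.resolve_right ?_ |> iff_true_intro]
    · trivial
    rw [dvd_iff_isRoot, IsRoot, hN, eval_add, eval_mul, eval_finsetSum, Finset.sum_eq_single_of_mem α hα]
    · have : eval α D = 0 := by
        rw [hD, eval_prod]
        exact Finset.prod_eq_zero hα (by simp [hdeg α hα])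
      rw [this, mul_zero, zero_add, eval_mul, eval_prod]
      refine mul_ne_zero ?_ (Finset.prod_ne_zero_iff.2 fun β hβ => ?_)
      · simp [← coeff_zero_eq_eval_zero, h0 α hα]
      · simp only [eval_pow, eval_sub, eval_X, eval_C]
        exact pow_ne_zero _ (sub_ne_zero.2 (Finset.ne_of_mem_erase hβ).symm)
    · intro β hβ hne
      rw [eval_mul, eval_prod, Finset.prod_eq_zero (i := α), mul_zero]
      · exact Finset.mem_erase.2 ⟨hne.symm, hα⟩
      · simp [hdeg α hα]
  have key : (RatFunc.C c + ∑ α ∈ B, Polynomial.aeval ((RatFunc.X - RatFunc.C α)⁻¹) (fα α) : RatFunc K)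
      = algebraMap K[X] (RatFunc K) N / algebraMap K[X] (RatFunc K) D := by
    have hD0 := RatFunc.algebraMap_ne_zero hDm.ne_zero
    rw [eq_div_iff hD0, hN, map_add, add_mul, map_sum, Finset.sum_mul, map_mul, RatFunc.algebraMap_C]
    congr 1
    refine Finset.sum_congr rfl fun α hα => ?_
    rw [aeval_inv_eq, hD, ← Finset.mul_prod_erase B _ hα, map_mul, ← mul_assoc, div_mul_cancel₀, ← map_mul]
    exact RatFunc.algebraMap_ne_zero (pow_ne_zero _ (X_sub_C_ne_zero α))
  rw [key]
  exact (num_denom_of_coprime hcop hDm).2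

/-- Rational functions regular at infinity. -/
noncomputable def regInf (K : Type*) [Field K] : Subring (RatFunc K) where
  carrier := {x | x.intDegree ≤ 0}
  mul_mem' := by
    intro a b ha hb
    simp only [Set.mem_ofPred_eq] at *
    by_cases h : a = 0
    · simp [h]
    by_cases h' : b = 0
    · simp [h']
    rw [RatFunc.intDegree_mul h h']; omega
  one_mem' := by simp
  add_mem' := by
    intro a b ha hb
    simp only [Set.mem_ofPred_eq] at *
    by_cases h' : b = 0
    · simpa [h'] using ha
    by_cases h : a + b = 0
    · simp [h]
    exact (RatFunc.intDegree_add_le h' h).trans (max_le ha hb)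
  zero_mem' := by simp
  neg_mem' := by
    intro a ha
    simpa using ha

lemma mem_regInf {K : Type*} [Field K] {x : RatFunc K} : x ∈ regInf K ↔ x.num.natDegree ≤ x.denom.natDegree := by
  change x.intDegree ≤ 0 ↔ _
  rw [RatFunc.intDegree]; omega

lemma C_mem_regInf {K : Type*} [Field K] (c : K) : RatFunc.C c ∈ regInf K := by
  change (RatFunc.C c).intDegree ≤ 0
  simp

lemma aeval_mem_regInf {K : Type*} [Field K] (α : K) (f : K[X]) :
    aeval ((RatFunc.X - RatFunc.C α : RatFunc K)⁻¹) f ∈ regInf K := by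
  have h : ((RatFunc.X - RatFunc.C α : RatFunc K)⁻¹) ∈ regInf K := by
    change (RatFunc.X - RatFunc.C α : RatFunc K)⁻¹.intDegree ≤ 0
    have : (RatFunc.X - RatFunc.C α : RatFunc K) = algebraMap K[X] (RatFunc K) (X - C α) := by
      simp
    rw [RatFunc.intDegree_inv, this, RatFunc.intDegree_polynomial]
    simp
  rw [aeval_eq_sum_range]
  refine sum_mem fun i _ => ?_
  rw [Algebra.smul_def]
  exact mul_mem (C_mem_regInf _) (pow_mem h _)

lemma pf_exists {K : Type*} [Field K] (N : K[X]) (B : Finset K) (n : K → ℕ)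
    (h : algebraMap K[X] (RatFunc K) N / algebraMap K[X] (RatFunc K) (∏ α ∈ B, (X - C α) ^ n α) ∈ regInf K) :
    ∃ (c : K) (fα : K → K[X]), (∀ α, (fα α).coeff 0 = 0) ∧
      algebraMap K[X] (RatFunc K) N / algebraMap K[X] (RatFunc K) (∏ α ∈ B, (X - C α) ^ n α) =
      RatFunc.C c + ∑ α ∈ B, Polynomial.aeval ((RatFunc.X - RatFunc.C α)⁻¹) (fα α) := by
  classical
  obtain ⟨q, r, hr, hE⟩ := mul_prod_pow_inverse_eq_quo_add_sum_rem_mul_pow_inverse (K := RatFunc K)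
    (s := B) N (g := fun α => X - C α) (fun α _ => monic_X_sub_C α)
    (fun α _ β _ hne => isCoprime_X_sub_C_of_isUnit_sub (by simpa [sub_eq_zero] using hne)) n
    (gi := fun α => (RatFunc.X - RatFunc.C α)⁻¹)
    (fun α _ => by
      have := XsubC_ne α
      simp [this])
  set fα : K → K[X] := fun α => ∑ j : Fin (n α), C ((r α j).coeff 0) * X ^ (j.1 + 1)
  have e1 : algebraMap K[X] (RatFunc K) N / algebraMap K[X] (RatFunc K) (∏ α ∈ B, (X - C α) ^ n α) =
      algebraMap K[X] (RatFunc K) q + ∑ α ∈ B, Polynomial.aeval ((RatFunc.X - RatFunc.C α)⁻¹) (fα α) := by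
    rw [div_eq_mul_inv, map_prod, ← Finset.prod_inv_distrib]
    convert hE using 2
    · refine Finset.prod_congr rfl fun α _ => ?_
      simp
    · refine Finset.sum_congr rfl fun α hα => ?_
      simp only [fα, map_sum, map_mul, aeval_C, aeval_X, map_pow]
      refine Finset.sum_congr rfl fun j _ => ?_
      congr 1
      have : (r α j) = C ((r α j).coeff 0) := by
        apply eq_C_of_degree_le_zero
        have := hr α hα j
        rw [degree_X_sub_C] at this
        exact Nat.WithBot.lt_one_iff_le_zero.mp this
      conv_rhs => rw [this]
      rfl
  have hq : algebraMap K[X] (RatFunc K) q ∈ regInf K := by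
    have : algebraMap K[X] (RatFunc K) q = _ := (sub_eq_of_eq_add e1).symm
    rw [this]
    exact sub_mem h (sum_mem fun α _ => aeval_mem_regInf _ _)
  have hq0 : q.natDegree = 0 := by
    have h2 : (algebraMap K[X] (RatFunc K) q).intDegree ≤ 0 := hq
    rw [RatFunc.intDegree_polynomial] at h2
    omega
  refine ⟨q.coeff 0, fα, ?_, ?_⟩
  · intro α
    simp [fα]
  · rw [e1]
    congr 1
    conv_lhs => rw [eq_C_of_natDegree_eq_zero hq0]
    simp

/-- distinct roots, as multiset of `multiplicity + 1`. -/
noncomputable def rtype {K : Type*} [Field K] [DecidableEq K] (D : K[X]) : Multiset ℕ :=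
  D.roots.toFinset.val.map (fun α => D.rootMultiplicity α + 1)

lemma roots_prod_pow {K : Type*} [Field K] [DecidableEq K] (B : Finset K) (n : K → ℕ)
    (hn : ∀ α ∈ B, n α ≠ 0) :
    (∏ α ∈ B, (X - C α) ^ n α).roots.toFinset = B ∧
    ∀ α ∈ B, (∏ α ∈ B, (X - C α) ^ n α).rootMultiplicity α = n α := by
  have h : (∏ α ∈ B, (X - C α) ^ n α).roots = ∑ α ∈ B, n α • {α} := by
    rw [roots_prod]
    · simp only [roots_pow, roots_X_sub_C]
      rfl
    · exact (monic_prod_of_monic _ _ fun α _ => (monic_X_sub_C α).pow _).ne_zero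
  constructor
  · ext β
    rw [h, Multiset.mem_toFinset, Multiset.mem_sum]
    constructor
    · rintro ⟨i, hi, h⟩
      have := Multiset.mem_of_mem_nsmul h
      rw [Multiset.mem_singleton] at this
      exact this ▸ hi
    · intro hβ
      exact ⟨β, hβ, by simp [Multiset.mem_nsmul, hn β hβ]⟩
  · intro α hα
    rw [← count_roots, h, Multiset.count_sum', Finset.sum_eq_single_of_mem α hα]
    · simp
    · intro β _ hne
      simp [hne.symm]

lemma rtype_prod {K : Type*} [Field K] [DecidableEq K] (B : Finset K) (n : K → ℕ)
    (hn : ∀ α ∈ B, n α ≠ 0) :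
    rtype (∏ α ∈ B, (X - C α) ^ n α) = B.val.map (fun α => n α + 1) := by
  obtain ⟨h1, h2⟩ := roots_prod_pow B n hn
  rw [rtype, h1]
  refine Multiset.map_congr rfl fun α hα => ?_
  rw [h2 α hα]

lemma prod_roots_eq {K : Type*} [Field K] [IsAlgClosed K] [DecidableEq K] (D : K[X]) (hD : D.Monic) :
    ∏ α ∈ D.roots.toFinset, (X - C α) ^ D.rootMultiplicity α = D := by
  rw [← prod_multiset_root_eq_finset_root]
  exact (IsAlgClosed.splits D).eq_prod_roots_of_monic hD |>.symm

lemma admissible_iff {K : Type*} [Field K] [IsAlgClosed K] [DecidableEq K] (p d r : ℕ) (hp : d + 2 < p)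
    (f : RatFunc K) :
    AdmissibleData p f d r ↔ f.num.natDegree ≤ f.denom.natDegree ∧
      (rtype f.denom).card = r + 1 ∧ (rtype f.denom).sum = d + 2 := by
  classical
  constructor
  · rintro ⟨c, B, fα, h0, h1, -, hf, hB, hd⟩
    have hdeg : ∀ α ∈ B, (fα α).natDegree ≠ 0 := by
      intro α hα h
      apply h0 α hα
      rw [eq_C_of_natDegree_eq_zero h, h1 α hα, C_0]
    have hden := pf_coprime c B fα h0 h1
    rw [← hf] at hden
    rw [hden]
    refine ⟨?_, ?_, ?_⟩
    · rw [← hden, ← mem_regInf, hf]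
      exact add_mem (C_mem_regInf _) (sum_mem fun α _ => aeval_mem_regInf _ _)
    · rw [rtype_prod _ _ hdeg]; simpa using hB
    · rw [rtype_prod _ _ hdeg, hd]; rfl
  · rintro ⟨hle, hcard, hsum⟩
    have hfd := prod_roots_eq f.denom (RatFunc.monic_denom f)
    have hf0 : f = algebraMap K[X] (RatFunc K) f.num / algebraMap K[X] (RatFunc K)
        (∏ α ∈ f.denom.roots.toFinset, (X - C α) ^ f.denom.rootMultiplicity α) := by
      rw [hfd, RatFunc.num_div_denom]
    obtain ⟨c, fα, hc, hE⟩ := pf_exists f.num f.denom.roots.toFinset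
      (fun α => f.denom.rootMultiplicity α) (by rw [← hf0]; exact mem_regInf.2 hle)
    rw [← hf0] at hE
    set B := f.denom.roots.toFinset.filter (fun α => fα α ≠ 0)
    have hE' : f = RatFunc.C c + ∑ α ∈ B, Polynomial.aeval ((RatFunc.X - RatFunc.C α)⁻¹) (fα α) := by
      conv_lhs => rw [hE]
      congr 1
      symm
      apply Finset.sum_filter_of_ne
      intro α _ h h'
      exact h (by rw [h', map_zero])
    have h0 : ∀ α ∈ B, fα α ≠ 0 := fun α hα => (Finset.mem_filter.1 hα).2
    have hdeg : ∀ α ∈ B, (fα α).natDegree ≠ 0 := by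
      intro α hα h
      apply h0 α hα
      rw [eq_C_of_natDegree_eq_zero h, hc α, C_0]
    have hden := pf_coprime c B fα h0 (fun α _ => hc α)
    rw [← hE'] at hden
    rw [hden, rtype_prod _ _ hdeg] at hcard hsum
    have hsum' : ∑ α ∈ B, ((fα α).natDegree + 1) = d + 2 := hsum
    refine ⟨c, B, fα, h0, fun α _ => hc α, ?_, hE', by simpa using hcard, hsum'.symm⟩
    intro α hα j hj
    rcases Nat.eq_zero_or_pos j with rfl | hj0
    · exact hc α
    · apply coeff_eq_zero_of_natDegree_lt
      have h1 := Nat.le_of_dvd hj0 hj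
      have h2 := Finset.single_le_sum (f := fun α => (fα α).natDegree + 1) (fun _ _ => Nat.zero_le _) hα
      omega

/-- roots of multiplicity `i + 1`. -/
noncomputable def rm {K : Type*} [Field K] [DecidableEq K] (D : K[X]) (i : ℕ) : Finset K :=
  D.roots.toFinset.filter (fun α => D.rootMultiplicity α = i + 1)

lemma count_rtype {K : Type*} [Field K] [DecidableEq K] (D : K[X]) (i : ℕ) :
    (rtype D).count (i + 2) = (rm D i).card := by
  rw [rtype, Multiset.count_map, rm, Finset.card_def, Finset.filter_val]
  congr 1
  refine Multiset.filter_congr fun α _ => ?_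
  omega

lemma two_le_rtype {K : Type*} [Field K] [DecidableEq K] (D : K[X]) (e : ℕ) (he : e ∈ rtype D) : 2 ≤ e := by
  rw [rtype, Multiset.mem_map] at he
  obtain ⟨α, hα, rfl⟩ := he
  have h : α ∈ D.roots := by simpa using hα
  rw [← Multiset.count_pos, count_roots] at h
  omega

lemma prod_rm {K : Type*} [Field K] [IsAlgClosed K] [DecidableEq K] (D : K[X]) (hD : D.Monic) (k : ℕ)
    (hk : ∀ α, D.rootMultiplicity α ≤ k) :
    ∏ i : Fin k, (∏ α ∈ rm D i, (X - C α)) ^ (i.1 + 1) = D := by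
  conv_rhs => rw [← prod_roots_eq D hD]
  simp_rw [rm, Finset.prod_filter, ← Finset.prod_pow]
  rw [Finset.prod_comm]
  refine Finset.prod_congr rfl fun α hα => ?_
  have h : α ∈ D.roots := by simpa using hα
  rw [← Multiset.count_pos, count_roots] at h
  have h2 := hk α
  rw [Finset.prod_eq_single_of_mem (⟨D.rootMultiplicity α - 1, by omega⟩ : Fin k) (Finset.mem_univ _)]
  · simp only
    rw [if_pos (by omega)]
    congr 1
    omega
  · intro b _ hb
    rw [if_neg, one_pow]
    intro h3
    apply hb
    ext
    simp [h3]

lemma rootMult_prod {K : Type*} [Field K] [DecidableEq K] {k : ℕ} (Q : Fin k → K[X])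
    (hQ : ∀ i, (Q i).Monic) (α : K) :
    (∏ i, Q i ^ (i.1 + 1)).rootMultiplicity α = ∑ i, (i.1 + 1) * (Q i).rootMultiplicity α := by
  rw [← count_roots, roots_prod]
  · change Multiset.count α (∑ i, (Q i ^ (i.1 + 1)).roots) = _
    rw [Multiset.count_sum']
    simp
  · exact (monic_prod_of_monic _ _ fun i _ => (hQ i).pow _).ne_zero

lemma rootMult_good {K : Type*} [Field K] [DecidableEq K] {k : ℕ} (Q : Fin k → K[X])
    (hQ : ∀ i, (Q i).Monic) (hsep : ∀ i, (Q i).Separable)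
    (hcop : ∀ i j, i ≠ j → IsCoprime (Q i) (Q j)) (i : Fin k) (α : K) (hα : (Q i).IsRoot α) :
    (∏ i, Q i ^ (i.1 + 1)).rootMultiplicity α = i.1 + 1 := by
  rw [rootMult_prod Q hQ, Finset.sum_eq_single_of_mem i (Finset.mem_univ _)]
  · have h1 := rootMultiplicity_le_one_of_separable (hsep i) α
    have h2 := (rootMultiplicity_pos (hQ i).ne_zero).2 hα
    have : (Q i).rootMultiplicity α = 1 := by omega
    rw [this, mul_one]
  · intro j _ hj
    rw [rootMultiplicity_eq_zero, mul_zero]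
    intro h
    obtain ⟨a, b, hab⟩ := hcop i j hj.symm
    have := congrArg (eval α) hab
    rw [IsRoot] at h hα
    simp [h, hα] at this

lemma isRoot_prod {K : Type*} [Field K] {k : ℕ} (Q : Fin k → K[X]) (α : K)
    (h : (∏ i, Q i ^ (i.1 + 1)).IsRoot α) : ∃ i, (Q i).IsRoot α := by
  rw [IsRoot, eval_prod, Finset.prod_eq_zero_iff] at h
  obtain ⟨i, _, hi⟩ := h
  rw [eval_pow] at hi
  exact ⟨i, by simpa using hi⟩

lemma rm_good {K : Type*} [Field K] [DecidableEq K] {k : ℕ} (Q : Fin k → K[X])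
    (hQ : ∀ i, (Q i).Monic) (hsep : ∀ i, (Q i).Separable)
    (hcop : ∀ i j, i ≠ j → IsCoprime (Q i) (Q j)) (i : Fin k) :
    rm (∏ i, Q i ^ (i.1 + 1)) i = (Q i).roots.toFinset := by
  have hne : (∏ i, Q i ^ (i.1 + 1)) ≠ 0 := (monic_prod_of_monic _ _ fun i _ => (hQ i).pow _).ne_zero
  ext α
  rw [rm, Finset.mem_filter, Multiset.mem_toFinset, Multiset.mem_toFinset, mem_roots hne, mem_roots (hQ i).ne_zero]
  constructor
  · rintro ⟨h1, h2⟩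
    obtain ⟨j, hj⟩ := isRoot_prod Q α h1
    rw [rootMult_good Q hQ hsep hcop j α hj] at h2
    have : j = i := Fin.ext (by omega)
    exact this ▸ hj
  · intro h
    have := rootMult_good Q hQ hsep hcop i α h
    refine ⟨?_, this⟩
    rw [← rootMultiplicity_pos hne]
    omega

lemma rtype_good {K : Type*} [Field K] [IsAlgClosed K] [DecidableEq K] {k : ℕ} (Q : Fin k → K[X])
    (hQ : ∀ i, (Q i).Monic) (hsep : ∀ i, (Q i).Separable)
    (hcop : ∀ i j, i ≠ j → IsCoprime (Q i) (Q j)) (M : Multiset ℕ)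
    (hM : ∀ e ∈ M, 2 ≤ e ∧ e ≤ k + 1) (hm : ∀ i, (Q i).natDegree = M.count (i.1 + 2)) :
    rtype (∏ i, Q i ^ (i.1 + 1)) = M := by
  have hne : (∏ i, Q i ^ (i.1 + 1)) ≠ 0 := (monic_prod_of_monic _ _ fun i _ => (hQ i).pow _).ne_zero
  ext e
  by_cases he : 2 ≤ e ∧ e ≤ k + 1
  · obtain ⟨i, rfl⟩ : ∃ i : Fin k, e = i.1 + 2 := ⟨⟨e - 2, by omega⟩, by simp; omega⟩
    rw [count_rtype, rm_good Q hQ hsep hcop, ← hm,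
      Multiset.toFinset_card_of_nodup (nodup_roots (hsep i)), (IsAlgClosed.splits (Q i)).natDegree_eq_card_roots]
  · rw [Multiset.count_eq_zero_of_notMem (fun h => he (hM e h)), Multiset.count_eq_zero]
    intro h
    rw [rtype, Multiset.mem_map] at h
    obtain ⟨α, hα, rfl⟩ := h
    have h : α ∈ (∏ i, Q i ^ (i.1 + 1)).roots := by simpa using hα
    obtain ⟨j, hj⟩ := isRoot_prod Q α ((mem_roots hne).1 h)
    have := rootMult_good Q hQ hsep hcop j α hj
    have := j.2
    omega

lemma eq_prod_of_sep {K : Type*} [Field K] [IsAlgClosed K] [DecidableEq K] (Q : K[X]) (hQ : Q.Monic)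
    (hsep : Q.Separable) : ∏ α ∈ Q.roots.toFinset, (X - C α) = Q := by
  conv_rhs => rw [(IsAlgClosed.splits Q).eq_prod_roots_of_monic hQ]
  rw [Finset.prod, Multiset.toFinset_val, (nodup_roots hsep).dedup]

lemma rm_descend {F K : Type*} [Field F] [Field K] [Algebra F K] [IsGalois F K] [DecidableEq K] (D : F[X]) (i : ℕ) :
    ∃ Q : F[X], Q.map (algebraMap F K) =
      ∏ α ∈ rm (D.map (algebraMap F K)) i, (X - C α) := by
  set D' := D.map (algebraMap F K)
  have : (∏ α ∈ rm D' i, (X - C α)) ∈ lifts (algebraMap F K) := by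
    rw [lifts_iff_coeff_lifts]
    intro n
    rw [InfiniteGalois.mem_range_algebraMap_iff_fixed]
    intro σ
    have hD : D'.map (σ : K →+* K) = D' := by
      simp only [D', Polynomial.map_map]
      congr 1
      ext x
      simp
    have hmult : ∀ α, D'.rootMultiplicity (σ α) = D'.rootMultiplicity α := by
      intro α
      conv_lhs => rw [← hD]
      exact (eq_rootMultiplicity_map (f := (σ : K →+* K)) σ.injective α).symm
    have hmem : ∀ α, α ∈ rm D' i ↔ σ α ∈ rm D' i := by
      intro α
      simp only [rm, Finset.mem_filter, Multiset.mem_toFinset, ← Multiset.count_pos, count_roots, hmult]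
    have hmap : (∏ α ∈ rm D' i, (X - C α)).map (σ : K →+* K) = ∏ α ∈ rm D' i, (X - C α) := by
      rw [Polynomial.map_prod]
      refine Finset.prod_equiv σ.toEquiv (fun α => hmem α) fun α _ => ?_
      simp
    have := congrArg (fun q => coeff q n) hmap
    simp only [coeff_map] at this
    exact this
  rw [lifts_iff_set_range] at this
  obtain ⟨Q, hQ⟩ := this
  exact ⟨Q, by simpa using hQ⟩

/-- parameter space: numerators and tuples of monic polynomials (lower order parts) -/
abbrev PSp (F : Type*) [Field F] (n : ℕ) {k : ℕ} (m : Fin k → ℕ) : Type _ :=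
  degreeLT F (n + 1) × (∀ i : Fin k, degreeLT F (m i))

/-- the monic polynomials of the tuple -/
noncomputable def Qp {F : Type*} [Field F] {n : ℕ} {k : ℕ} {m : Fin k → ℕ} (x : PSp F n m) (i : Fin k) : F[X] :=
  X ^ (m i) + (x.2 i : F[X])

instance finDegLT {F : Type*} [Field F] [Finite F] (n : ℕ) : Finite (degreeLT F n) :=
  Finite.of_equiv _ (degreeLTEquiv F n).toEquiv.symm

lemma card_degLT {F : Type*} [Field F] [Fintype F] (n : ℕ) :
    Nat.card (degreeLT F n) = Fintype.card F ^ n := by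
  rw [Nat.card_congr (degreeLTEquiv F n).toEquiv]
  simp

lemma card_PSp {F : Type*} [Field F] [Fintype F] (n : ℕ) {k : ℕ} (m : Fin k → ℕ) :
    Nat.card (PSp F n m) = Fintype.card F ^ (n + 1 + ∑ i, m i) := by
  rw [Nat.card_prod, Nat.card_pi]
  simp_rw [card_degLT]
  rw [Finset.prod_pow_eq_pow_sum, ← pow_add]

lemma Qp_monic {F : Type*} [Field F] {n : ℕ} {k : ℕ} {m : Fin k → ℕ} (x : PSp F n m) (i : Fin k) :
    (Qp x i).Monic := monic_X_pow_add (mem_degreeLT.1 (x.2 i).2)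

lemma Qp_natDegree {F : Type*} [Field F] {n : ℕ} {k : ℕ} {m : Fin k → ℕ} (x : PSp F n m) (i : Fin k) :
    (Qp x i).natDegree = m i := by
  apply natDegree_eq_of_degree_eq_some
  rw [Qp, degree_add_eq_left_of_degree_lt, degree_X_pow]
  rw [degree_X_pow]
  exact mem_degreeLT.1 (x.2 i).2

lemma shift_bound {F V : Type*} [Field F] [Fintype F] [AddCommGroup V] [Module F V] [Fintype V]
    [DecidableEq V] (E : Finset V) (s : V) (b : ℕ)
    (h : ∀ x : V, {c : F | x + c • s ∈ E}.ncard ≤ b) :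
    Fintype.card F * E.card ≤ b * Fintype.card V := by
  classical
  have key := Finset.sum_card_bipartiteAbove_eq_sum_card_bipartiteBelow
    (fun (c : F) (x : V) => x + c • s ∈ E) (s := Finset.univ) (t := Finset.univ)
  have h1 : ∀ c : F, (Finset.bipartiteAbove (fun (c : F) (x : V) => x + c • s ∈ E) Finset.univ c).card
      = E.card := by
    intro c
    refine Finset.card_bij (fun x _ => x + c • s) ?_ ?_ ?_
    · intro x hx
      simpa [Finset.bipartiteAbove] using hx
    · intro x _ y _ hxy
      simpa using hxy
    · intro y hy
      exact ⟨y - c • s, by simpa [Finset.bipartiteAbove] using hy, by simp⟩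
  have h2 : ∀ x : V, (Finset.bipartiteBelow (fun (c : F) (x : V) => x + c • s ∈ E) Finset.univ x).card
      ≤ b := by
    intro x
    refine le_trans (le_of_eq ?_) (h x)
    rw [← Set.ncard_coe_finset]
    congr 1
    ext c
    simp [Finset.bipartiteBelow]
  calc Fintype.card F * E.card = ∑ c : F, E.card := by simp
    _ = ∑ x : V, _ := by rw [← key]; exact Finset.sum_congr rfl fun c _ => (h1 c).symm
    _ ≤ ∑ x : V, b := Finset.sum_le_sum fun x _ => h2 x
    _ = _ := by simp [mul_comm]

lemma noncoprime_count {F : Type*} [Field F] [Finite F] (A B : F[X]) (hB : B ≠ 0) :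
    {c : F | ¬ IsCoprime (A + C c) B}.ncard ≤ B.natDegree := by
  classical
  have hex : ∀ c : F, ¬ IsCoprime (A + C c) B →
      ∃ α : AlgebraicClosure F, aeval α (A + C c) = 0 ∧ aeval α B = 0 := by
    intro c h
    rw [isCoprime_iff_aeval_ne_zero_of_isAlgClosed F (AlgebraicClosure F)] at h
    push Not at h
    exact h
  choose! g hg1 hg2 using hex
  have hB' : B.map (algebraMap F (AlgebraicClosure F)) ≠ 0 := by
    rwa [Ne, Polynomial.map_eq_zero]
  have h1 : {c : F | ¬ IsCoprime (A + C c) B}.ncard ≤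
      ((B.map (algebraMap F (AlgebraicClosure F))).roots.toFinset : Set (AlgebraicClosure F)).ncard := by
    refine Set.ncard_le_ncard_of_injOn g ?_ ?_ (Finset.finite_toSet _)
    · intro c hc
      have := hg2 c hc
      simp only [Finset.mem_coe, Multiset.mem_toFinset]
      rw [mem_roots hB', IsRoot, eval_map_algebraMap]
      exact this
    · intro c hc c' hc' he
      have e1 := hg1 c hc
      have e2 := hg1 c' hc'
      rw [← he] at e2
      rw [map_add, aeval_C] at e1 e2
      exact (algebraMap F (AlgebraicClosure F)).injective (add_left_cancel (e1.trans e2.symm))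
  refine h1.trans ?_
  rw [Set.ncard_coe_finset]
  exact (Multiset.toFinset_card_le _).trans ((card_roots' _).trans (natDegree_map_le))

/-- Bad events. -/
def Bad {F : Type*} [Field F] {n : ℕ} {k : ℕ} {m : Fin k → ℕ} (e : Option (Fin k) × Fin k) (x : PSp F n m) : Prop :=
  match e.1 with
  | none => ¬ IsCoprime (x.1 : F[X]) (Qp x e.2)
  | some i => if i = e.2 then ¬ (Qp x i).Separable else ¬ IsCoprime (Qp x i) (Qp x e.2)

lemma bad_bound {F : Type*} [Field F] [Fintype F] {p : ℕ} (hp : p.Prime) (hF : Fintype.card F = p)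
    {n k b : ℕ} {m : Fin k → ℕ} (hb : ∀ i, m i ≤ b) (hbp : b < p) (e : Option (Fin k) × Fin k)
    [Fintype (PSp F n m)] [DecidableEq (PSp F n m)] (E : Finset (PSp F n m)) (hE : ∀ x, x ∈ E ↔ Bad e x) :
    p * E.card ≤ b * Fintype.card (PSp F n m) := by
  classical
  have : Fact p.Prime := ⟨hp⟩
  have : CharP F p := charP_of_card_eq_prime hF
  rw [← hF]
  obtain ⟨_ | i, j⟩ := e
  · have h1 : (1 : F[X]) ∈ degreeLT F (n + 1) := by
      rw [mem_degreeLT, degree_one]; exact_mod_cast Nat.succ_pos n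
    refine shift_bound E ((⟨1, h1⟩, 0) : PSp F n m) b fun x => ?_
    have := noncoprime_count (x.1 : F[X]) (Qp x j) (Qp_monic x j).ne_zero
    rw [Qp_natDegree] at this
    refine le_trans (le_of_eq ?_) (this.trans (hb j))
    congr 1
    ext c
    rw [Set.mem_ofPred_eq, Set.mem_ofPred_eq, hE]
    simp [Bad, Qp, smul_eq_C_mul]
  · rcases Nat.eq_zero_or_pos (m i) with hm | hm
    · have : E = ∅ := by
        rw [Finset.eq_empty_iff_forall_notMem]
        intro x hx
        rw [hE] at hx
        have hQ : Qp x i = 1 := by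
          exact eq_one_of_monic_natDegree_zero (Qp_monic x i) (by rw [Qp_natDegree, hm])
        simp only [Bad, hQ] at hx
        split_ifs at hx with hh
        · exact hx separable_one
        · exact hx isCoprime_one_left
      simp [this]
    · have h1 : (1 : F[X]) ∈ degreeLT F (m i) := by
        rw [mem_degreeLT, degree_one]; exact_mod_cast hm
      refine shift_bound E ((0, Pi.single i ⟨1, h1⟩) : PSp F n m) b fun x => ?_
      have hsi : ∀ c : F, Qp (x + c • ((0, Pi.single i ⟨1, h1⟩) : PSp F n m)) i = Qp x i + C c := by
        intro c
        simp [Qp, smul_eq_C_mul, add_assoc]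
      have hsj : j ≠ i → ∀ c : F, Qp (x + c • ((0, Pi.single i ⟨1, h1⟩) : PSp F n m)) j = Qp x j := by
        intro hj c
        simp [Qp, hj]
      by_cases hij : i = j
      · have hder : derivative (Qp x i) ≠ 0 := by
          intro h0
          have := congrArg (fun q => coeff q (m i - 1)) h0
          simp only [coeff_derivative, coeff_zero] at this
          rw [Nat.sub_add_cancel hm] at this
          have h3 : (Qp x i).coeff (m i) = 1 := by
            have := (Qp_monic x i).coeff_natDegree
            rwa [Qp_natDegree] at this
          rw [h3, one_mul] at this
          have h4 : ((m i : ℕ) : F) = 0 := by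
            rw [← this]
            have : m i = (m i - 1) + 1 := by omega
            conv_lhs => rw [this]
            push_cast; rfl
          rw [CharP.cast_eq_zero_iff F p] at h4
          have := Nat.le_of_dvd hm h4
          have := hb i
          omega
        have := noncoprime_count (Qp x i) (derivative (Qp x i)) hder
        have h5 := natDegree_derivative_le (Qp x i)
        rw [Qp_natDegree] at h5
        refine le_trans (le_of_eq ?_) ((this.trans h5).trans ((Nat.sub_le _ _).trans (hb i)))
        congr 1
        ext c
        rw [Set.mem_ofPred_eq, Set.mem_ofPred_eq, hE]
        simp only [Bad, hij, if_true]
        rw [← hij, hsi, Separable, derivative_add, derivative_C, add_zero]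
      · have := noncoprime_count (Qp x i) (Qp x j) (Qp_monic x j).ne_zero
        rw [Qp_natDegree] at this
        refine le_trans (le_of_eq ?_) (this.trans (hb j))
        congr 1
        ext c
        rw [Set.mem_ofPred_eq, Set.mem_ofPred_eq, hE]
        simp only [Bad, hij, if_false]
        rw [hsi, hsj (Ne.symm hij)]

lemma good_bound {F : Type*} [Field F] [Fintype F] {p : ℕ} (hp : p.Prime) (hF : Fintype.card F = p)
    {n k b : ℕ} {m : Fin k → ℕ} (hb : ∀ i, m i ≤ b) (hbp : b < p) :
    p * Nat.card (PSp F n m) ≤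
      p * Nat.card {x : PSp F n m // ∀ e, ¬ Bad e x} + ((k + 1) * k * b) * Nat.card (PSp F n m) := by
  classical
  have : Fintype (PSp F n m) := Fintype.ofFinite _
  rw [Nat.card_eq_fintype_card, Nat.card_eq_fintype_card, Fintype.card_subtype]
  set G := Finset.univ.filter (fun x : PSp F n m => ∀ e, ¬ Bad e x)
  set E := fun e => Finset.univ.filter (fun x : PSp F n m => Bad e x)
  have hcov : (Finset.univ : Finset (PSp F n m)) ⊆ G ∪ Finset.univ.biUnion E := by
    intro x _
    simp only [G, E, Finset.mem_union, Finset.mem_filter, Finset.mem_univ, true_and, Finset.mem_biUnion]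
    by_cases h : ∀ e, ¬ Bad e x
    · exact Or.inl h
    · push Not at h
      exact Or.inr h
  have h1 := (Finset.card_le_card hcov).trans (Finset.card_union_le _ _)
  rw [Finset.card_univ] at h1
  have h2 : p * (Finset.univ.biUnion E).card ≤ ((k + 1) * k * b) * Fintype.card (PSp F n m) := by
    calc p * (Finset.univ.biUnion E).card ≤ p * ∑ e, (E e).card :=
          Nat.mul_le_mul_left _ Finset.card_biUnion_le
      _ = ∑ e, p * (E e).card := Finset.mul_sum _ _ _
      _ ≤ ∑ e : Option (Fin k) × Fin k, b * Fintype.card (PSp F n m) :=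
          Finset.sum_le_sum fun e _ => bad_bound hp hF hb hbp e (E e) (fun x => by simp [E])
      _ = _ := by simp [mul_assoc]
  calc p * Fintype.card (PSp F n m) ≤ p * (G.card + (Finset.univ.biUnion E).card) := Nat.mul_le_mul_left _ h1
    _ ≤ _ := by rw [mul_add]; omega

/-- rational functions regular at infinity with pole type `M` -/
def WM (F : Type) [Field F] [DecidableEq (AlgebraicClosure F)] (M : Multiset ℕ) : Type :=
  {f : RatFunc F // f.num.natDegree ≤ f.denom.natDegree ∧
    rtype (f.denom.map (algebraMap F (AlgebraicClosure F))) = M}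

lemma WM_upper {F : Type} [Field F] [Finite F] [DecidableEq (AlgebraicClosure F)] (M : Multiset ℕ) (k : ℕ)
    (hM : ∀ e ∈ M, e ≤ k + 1) :
    ∃ g : WM F M → PSp F (∑ i : Fin k, (i.1 + 1) * M.count (i.1 + 2)) (fun i : Fin k => M.count (i.1 + 2)),
      Function.Injective g := by
  classical
  have hex : ∀ f : WM F M, ∃ x : PSp F (∑ i : Fin k, (i.1 + 1) * M.count (i.1 + 2))
      (fun i : Fin k => M.count (i.1 + 2)),
      f.1.num = (x.1 : F[X]) ∧ f.1.denom = ∏ i : Fin k, (Qp x i) ^ (i.1 + 1) := by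
    rintro ⟨f, hf1, hf2⟩
    set φ := algebraMap F (AlgebraicClosure F)
    choose Q hQ using fun i : Fin k => rm_descend (K := AlgebraicClosure F) f.denom i.1
    have hDm : (f.denom.map φ).Monic := (RatFunc.monic_denom f).map φ
    have hk : ∀ α, (f.denom.map φ).rootMultiplicity α ≤ k := by
      intro α
      by_cases hα : α ∈ (f.denom.map φ).roots
      · have : (f.denom.map φ).rootMultiplicity α + 1 ∈ M := by
          rw [← hf2, rtype, Multiset.mem_map]
          exact ⟨α, by simpa using hα, rfl⟩
        have := hM _ this
        omega
      · rw [← Multiset.count_pos, count_roots] at hα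
        omega
    have hprod := prod_rm (f.denom.map φ) hDm k hk
    have hden : f.denom = ∏ i, Q i ^ (i.1 + 1) := by
      apply Polynomial.map_injective φ φ.injective
      rw [← hprod, Polynomial.map_prod]
      refine Finset.prod_congr rfl fun i _ => ?_
      rw [Polynomial.map_pow, hQ]
    have hQm : ∀ i, (Q i).Monic := by
      intro i
      apply monic_of_injective φ.injective
      rw [hQ]
      exact monic_prod_of_monic _ _ fun α _ => monic_X_sub_C α
    have hQd : ∀ i, (Q i).natDegree = M.count (i.1 + 2) := by
      intro i
      rw [← natDegree_map φ, hQ, ← hf2, count_rtype, natDegree_prod_of_monic _ _ fun α _ => monic_X_sub_C α]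
      simp only [natDegree_X_sub_C, Finset.sum_const, smul_eq_mul, mul_one]
      rfl
    have hDd : f.denom.natDegree = ∑ i : Fin k, (i.1 + 1) * M.count (i.1 + 2) := by
      rw [hden, natDegree_prod_of_monic _ _ fun i _ => (hQm i).pow _]
      refine Finset.sum_congr rfl fun i _ => ?_
      rw [(hQm i).natDegree_pow, hQd]
    refine ⟨(⟨f.num, ?_⟩, fun i => ⟨Q i - X ^ (M.count (i.1 + 2)), ?_⟩), rfl, ?_⟩
    · rw [mem_degreeLT]
      refine lt_of_le_of_lt degree_le_natDegree ?_
      rw [hDd] at hf1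
      exact_mod_cast Nat.lt_succ_of_le hf1
    · rw [mem_degreeLT]
      have h1 : (Q i).degree = (M.count (i.1 + 2) : ℕ) := by
        rw [degree_eq_natDegree (hQm i).ne_zero, hQd]
      rw [← h1]
      apply degree_sub_lt_left
      · rw [degree_X_pow, h1]
      · exact (hQm i).ne_zero
      · rw [(hQm i).leadingCoeff, (monic_X_pow _).leadingCoeff]
    · refine hden.trans (Finset.prod_congr rfl fun i _ => ?_)
      simp [Qp]
  choose g hg1 hg2 using hex
  refine ⟨g, fun f f' h => ?_⟩
  apply Subtype.ext
  rw [← RatFunc.num_div_denom f.1, ← RatFunc.num_div_denom f'.1, hg1, hg2, hg1 f', hg2 f', h]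

lemma WM_lower {F : Type} [Field F] [Finite F] [DecidableEq (AlgebraicClosure F)] (M : Multiset ℕ) (k : ℕ)
    (hM : ∀ e ∈ M, 2 ≤ e ∧ e ≤ k + 1) :
    ∃ g : {x : PSp F (∑ i : Fin k, (i.1 + 1) * M.count (i.1 + 2)) (fun i : Fin k => M.count (i.1 + 2)) //
      ∀ e, ¬ Bad e x} → WM F M, Function.Injective g := by
  classical
  set φ := algebraMap F (AlgebraicClosure F)
  have hgood : ∀ x : {x : PSp F (∑ i : Fin k, (i.1 + 1) * M.count (i.1 + 2))
      (fun i : Fin k => M.count (i.1 + 2)) // ∀ e, ¬ Bad e x},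
      (∀ i, IsCoprime (x.1.1 : F[X]) (Qp x.1 i)) ∧ (∀ i, (Qp x.1 i).Separable) ∧
      (∀ i j, i ≠ j → IsCoprime (Qp x.1 i) (Qp x.1 j)) := by
    rintro ⟨x, hx⟩
    refine ⟨fun i => ?_, fun i => ?_, fun i j hij => ?_⟩
    · simpa [Bad] using hx (none, i)
    · simpa [Bad] using hx (some i, i)
    · simpa [Bad, hij] using hx (some i, j)
  have hex : ∀ x : {x : PSp F (∑ i : Fin k, (i.1 + 1) * M.count (i.1 + 2))
      (fun i : Fin k => M.count (i.1 + 2)) // ∀ e, ¬ Bad e x}, ∃ f : WM F M,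
      f.1.num = (x.1.1 : F[X]) ∧ f.1.denom = ∏ i : Fin k, (Qp x.1 i) ^ (i.1 + 1) := by
    intro x
    obtain ⟨h1, h2, h3⟩ := hgood x
    have hDm : (∏ i : Fin k, (Qp x.1 i) ^ (i.1 + 1)).Monic :=
      monic_prod_of_monic _ _ fun i _ => (Qp_monic x.1 i).pow _
    have hcop : IsCoprime (x.1.1 : F[X]) (∏ i : Fin k, (Qp x.1 i) ^ (i.1 + 1)) :=
      IsCoprime.prod_right fun i _ => (h1 i).pow_right
    obtain ⟨hn, hd⟩ := num_denom_of_coprime hcop hDm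
    refine ⟨⟨_, ?_, ?_⟩, hn, hd⟩
    · rw [hn, hd, natDegree_prod_of_monic _ _ fun i _ => (Qp_monic x.1 i).pow _]
      have haux : ∀ (N : ℕ) (q : F[X]), q ∈ degreeLT F (N + 1) → q.natDegree ≤ N := by
        intro N q hq
        rw [degreeLT_succ_eq_degreeLE, mem_degreeLE] at hq
        exact natDegree_le_of_degree_le hq
      have h4 := haux _ _ x.1.1.2
      refine h4.trans (le_of_eq (Finset.sum_congr rfl fun i _ => ?_))
      rw [(Qp_monic x.1 i).natDegree_pow, Qp_natDegree]
    · rw [hd, Polynomial.map_prod]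
      simp_rw [Polynomial.map_pow]
      refine rtype_good (fun i => (Qp x.1 i).map φ) (fun i => (Qp_monic x.1 i).map φ)
        (fun i => (h2 i).map) (fun i j hij => ?_) M hM (fun i => ?_)
      · simpa using (h3 i j hij).map (Polynomial.mapRingHom φ)
      · rw [natDegree_map, Qp_natDegree]
  choose g hg1 hg2 using hex
  refine ⟨g, fun x y h => ?_⟩
  have hN : (x.1.1 : F[X]) = y.1.1 := by rw [← hg1, ← hg1, h]
  have hD : (∏ i : Fin k, (Qp x.1 i) ^ (i.1 + 1)) = ∏ i : Fin k, (Qp y.1 i) ^ (i.1 + 1) := by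
    rw [← hg2, ← hg2, h]
  have hrec : ∀ x : {x : PSp F (∑ i : Fin k, (i.1 + 1) * M.count (i.1 + 2))
      (fun i : Fin k => M.count (i.1 + 2)) // ∀ e, ¬ Bad e x}, ∀ i, (Qp x.1 i).map φ =
      ∏ α ∈ rm ((∏ i : Fin k, (Qp x.1 i) ^ (i.1 + 1)).map φ) i.1, (X - C α) := by
    intro x i
    obtain ⟨h1, h2, h3⟩ := hgood x
    rw [Polynomial.map_prod]
    simp_rw [Polynomial.map_pow]
    rw [rm_good (fun i => (Qp x.1 i).map φ) (fun i => (Qp_monic x.1 i).map φ)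
        (fun i => (h2 i).map) (fun i j hij => by simpa using (h3 i j hij).map (Polynomial.mapRingHom φ)),
        eq_prod_of_sep _ ((Qp_monic x.1 i).map φ) (h2 i).map]
  apply Subtype.ext
  apply Prod.ext
  · exact Subtype.ext hN
  · funext i
    apply Subtype.ext
    have : Qp x.1 i = Qp y.1 i := by
      apply Polynomial.map_injective φ φ.injective
      rw [hrec x, hrec y, hD]
    simpa [Qp] using this

lemma WM_bounds {F : Type} [Field F] [Fintype F] [DecidableEq (AlgebraicClosure F)] {p d : ℕ}
    (hp : p.Prime) (hF : Fintype.card F = p) (hdp : d + 2 < p)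
    (M : Multiset ℕ) (hM : ∀ e ∈ M, 2 ≤ e) (hs : M.sum = d + 2) :
    Finite (WM F M) ∧ Nat.card (WM F M) ≤ p ^ (d + 3) ∧
    p * p ^ (d + 3) ≤ p * Nat.card (WM F M) + ((d + 2) * (d + 1) * (d + 2)) * p ^ (d + 3) := by
  classical
  have hM' : ∀ e ∈ M, 2 ≤ e ∧ e ≤ (d + 1) + 1 := fun e he =>
    ⟨hM e he, by have := Multiset.le_sum_of_mem he; omega⟩
  obtain ⟨g, hg⟩ := WM_upper (F := F) M (d + 1) (fun e he => (hM' e he).2)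
  obtain ⟨g', hg'⟩ := WM_lower (F := F) M (d + 1) hM'
  have hsum : (∑ i : Fin (d + 1), (i.1 + 1) * M.count (i.1 + 2)) + 1 + ∑ i : Fin (d + 1), M.count (i.1 + 2)
      = d + 3 := by
    have h1 : M.sum = ∑ e ∈ Finset.range (d + 3), M.count e • e := by
      apply Finset.sum_multiset_count_of_subset
      intro e he
      have := hM' e (by simpa using he)
      simp; omega
    have c0 : M.count 0 = 0 := Multiset.count_eq_zero.2 fun h => by have := hM _ h; omega
    have c1 : M.count 1 = 0 := Multiset.count_eq_zero.2 fun h => by have := hM _ h; omega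
    rw [Finset.sum_range_succ', Finset.sum_range_succ', c1, Finset.sum_range] at h1
    have h2 : (∑ i : Fin (d + 1), (i.1 + 1) * M.count (i.1 + 2)) + ∑ i : Fin (d + 1), M.count (i.1 + 2)
      = ∑ i : Fin (d + 1), M.count (i.1 + 1 + 1) • (i.1 + 1 + 1) := by
      rw [← Finset.sum_add_distrib]
      refine Finset.sum_congr rfl fun i _ => ?_
      simp only [smul_eq_mul]
      ring
    simp only [zero_smul, smul_zero, add_zero] at h1
    omega
  have hcard := card_PSp (F := F) (∑ i : Fin (d + 1), (i.1 + 1) * M.count (i.1 + 2))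
    (fun i : Fin (d + 1) => M.count (i.1 + 2))
  rw [hsum, hF] at hcard
  have hfin : Finite (WM F M) := Finite.of_injective g hg
  have hb : ∀ i : Fin (d + 1), M.count (i.1 + 2) ≤ d + 2 := by
    intro i
    have : M.count (i.1 + 2) ≤ ∑ i : Fin (d + 1), M.count (i.1 + 2) :=
      Finset.single_le_sum (f := fun i : Fin (d + 1) => M.count (i.1 + 2)) (fun _ _ => Nat.zero_le _)
        (Finset.mem_univ i)
    omega
  have hgb := good_bound (F := F) hp hF (n := ∑ i : Fin (d + 1), (i.1 + 1) * M.count (i.1 + 2)) hb hdp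
  rw [hcard] at hgb
  refine ⟨hfin, ?_, ?_⟩
  · rw [← hcard]
    exact Nat.card_le_card_of_injective g hg
  · have := Nat.card_le_card_of_injective g' hg'
    have := Nat.mul_le_mul_left p this
    have h3 : (d + 1 + 1) * (d + 1) * (d + 2) = (d + 2) * (d + 1) * (d + 2) := rfl
    rw [h3] at hgb
    omega

lemma count_sigma {F : Type} [Field F] [DecidableEq (AlgebraicClosure F)] {d : ℕ}
    (R : Multiset ℕ → Prop) (A : Finset (Nat.Partition (d + 2)))
    (hA : ∀ P, P ∈ A ↔ (R P.parts ∧ ∀ i ∈ P.parts, 2 ≤ i))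
    (hfin : ∀ P ∈ A, Finite (WM F P.parts)) :
    Nat.card {f : RatFunc F // f.num.natDegree ≤ f.denom.natDegree ∧
      R (rtype (f.denom.map (algebraMap F (AlgebraicClosure F)))) ∧
      (rtype (f.denom.map (algebraMap F (AlgebraicClosure F)))).sum = d + 2} =
    ∑ P ∈ A, Nat.card (WM F P.parts) := by
  classical
  have : ∀ P : A, Finite (WM F P.1.parts) := fun P => hfin P.1 P.2
  rw [← Finset.sum_coe_sort A (fun P => Nat.card (WM F P.parts)), ← Nat.card_sigma]
  symm
  refine Nat.card_eq_of_bijective (fun y => ⟨y.2.1, y.2.2.1, ?_, ?_⟩) ⟨?_, ?_⟩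
  · rw [y.2.2.2]; exact ((hA _).1 y.1.2).1
  · rw [y.2.2.2]; exact y.1.1.parts_sum
  · rintro ⟨⟨P, hP⟩, f, hf1, hf2⟩ ⟨⟨P', hP'⟩, f', hf1', hf2'⟩ h
    have h' : f = f' := congrArg Subtype.val h
    subst h'
    have : P = P' := Nat.Partition.ext (hf2.symm.trans hf2')
    subst this
    rfl
  · rintro ⟨f, h1, h2, h3⟩
    have h4 : ∀ i ∈ rtype (f.denom.map (algebraMap F (AlgebraicClosure F))), 2 ≤ i := two_le_rtype _
    let P : Nat.Partition (d + 2) := ⟨_, fun {i} hi => lt_of_lt_of_le Nat.zero_lt_two (h4 i hi), h3⟩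
    exact ⟨⟨⟨P, (hA P).2 ⟨h2, h4⟩⟩, f, h1, rfl⟩, rfl⟩

lemma TTotal_eq (d : ℕ) : TTotal d =
    (Finset.univ.filter (fun P : Nat.Partition (d + 2) => ∀ i ∈ P.parts, 2 ≤ i)).card := by
  rw [TTotal, Finset.card_eq_sum_card_fiberwise (f := fun P => Multiset.card P.parts - 1)
    (t := Finset.range (d / 2 + 1))]
  · refine Finset.sum_congr rfl fun r _ => ?_
    rw [T, Finset.filter_filter]
    congr 1
    refine Finset.filter_congr fun P _ => ?_
    have : P.parts.card ≠ 0 := by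
      intro h
      rw [Multiset.card_eq_zero] at h
      have := P.parts_sum
      simp [h] at this
    constructor
    · rintro ⟨h1, h2⟩; exact ⟨h2, by omega⟩
    · rintro ⟨h1, h2⟩; exact ⟨by omega, h1⟩
  · intro P hP
    have hP' : ∀ i ∈ P.parts, 2 ≤ i := by simpa using hP
    have := Multiset.card_nsmul_le_sum hP'
    rw [P.parts_sum, smul_eq_mul] at this
    simp; omega

lemma ratio_est (a b s t q δ : ℝ) (ha : 0 ≤ a) (hab : a ≤ b) (hb : 0 < b) (hq : 0 < q) (hδ : 0 ≤ δ)
    (hδ2 : δ ≤ 1 / 2) (hs1 : a * (q * (1 - δ)) ≤ s) (hs2 : s ≤ a * q) (ht1 : b * (q * (1 - δ)) ≤ t)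
    (ht2 : t ≤ b * q) : |s / t - a / b| ≤ 2 * δ := by
  have hbq : 0 < b * q := mul_pos hb hq
  have ht0 : b * q / 2 ≤ t := by nlinarith
  have ht : 0 < t := by linarith
  rw [div_sub_div _ _ ht.ne' hb.ne', abs_div, abs_of_pos (mul_pos ht hb), div_le_iff₀ (mul_pos ht hb)]
  have h1 : |s * b - t * a| ≤ a * b * q * δ := by
    rw [abs_le]
    constructor
    · nlinarith [mul_le_mul_of_nonneg_right hs1 hb.le, mul_le_mul_of_nonneg_right ht2 ha]
    · nlinarith [mul_le_mul_of_nonneg_right hs2 hb.le, mul_le_mul_of_nonneg_right ht1 ha]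
  refine h1.trans ?_
  calc a * b * q * δ ≤ b * b * q * δ := by gcongr
    _ = 2 * δ * (b * q / 2 * b) := by ring
    _ ≤ 2 * δ * (t * b) := by gcongr

/-- **Arithmetic problem** (Theorem `last main theorem`): fix `d > 0` and `0 ≤ r ≤ ⌊d/2⌋`.
As the prime `p → ∞`, with `g = d(p-1)/2` and `τ = r(p-1)`, the proportion of admissible
rational functions over `F_p` (any field with `p` elements) of genus `g` whose
Artin–Schreier cover has `p`-rank `τ` converges to `T(r+1, d+2) / T(d+2)`. -/
theorem arithmetic_p_rank_statistics (d r : ℕ) (hd : 0 < d) (hr : r ≤ d / 2) :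
    ∀ ε : ℝ, 0 < ε → ∃ N : ℕ, ∀ p : ℕ, p.Prime → N ≤ p →
      ∀ (F : Type) [Field F] [Fintype F], Fintype.card F = p →
        |(SCount p d r F : ℝ) / (STotal p d F) - (T d r : ℝ) / (TTotal d)| < ε := by
  classical
  intro ε hε
  set Cn : ℕ := (d + 2) * (d + 1) * (d + 2) with hCn
  obtain ⟨N₁, hN₁⟩ := exists_nat_gt (2 * (Cn : ℝ) / ε)
  refine ⟨max (max N₁ (2 * Cn)) (d + 3), fun p hp hNp F _ _ hF => ?_⟩
  have hpN : N₁ ≤ p := (le_max_left _ _).trans ((le_max_left _ _).trans hNp)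
  have hpC : 2 * Cn ≤ p := (le_max_right _ _).trans ((le_max_left _ _).trans hNp)
  have hpd : d + 2 < p := (le_max_right _ _).trans hNp
  set A := Finset.univ.filter (fun P : Nat.Partition (d + 2) =>
      Multiset.card P.parts = r + 1 ∧ ∀ i ∈ P.parts, 2 ≤ i) with hA
  set B := Finset.univ.filter (fun P : Nat.Partition (d + 2) => ∀ i ∈ P.parts, 2 ≤ i) with hB
  have hw : ∀ P ∈ B, _ := fun P hP => WM_bounds (F := F) hp hF hpd P.parts
    (by simpa [hB] using hP) P.parts_sum
  have hAB : A ⊆ B := by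
    intro P hP
    simp only [hA, hB, Finset.mem_filter, Finset.mem_univ, true_and] at hP ⊢
    exact hP.2
  have hadm : ∀ (f : RatFunc F) (r : ℕ),
      AdmissibleData p (RatFunc.baseChange (algebraMap F (AlgebraicClosure F)) f) d r ↔
      f.num.natDegree ≤ f.denom.natDegree ∧
      (rtype (f.denom.map (algebraMap F (AlgebraicClosure F)))).card = r + 1 ∧
      (rtype (f.denom.map (algebraMap F (AlgebraicClosure F)))).sum = d + 2 := by
    intro f r
    obtain ⟨h1, h2⟩ := num_denom_baseChange (algebraMap F (AlgebraicClosure F)) f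
    rw [admissible_iff p d r hpd, h1, h2, natDegree_map, natDegree_map]
  have hS : SCount p d r F = ∑ P ∈ A, Nat.card (WM F P.parts) := by
    rw [← count_sigma (F := F) (fun M => M.card = r + 1) A (by simp [hA])
      (fun P hP => (hw P (hAB hP)).1)]
    exact Nat.card_congr (Equiv.subtypeEquivRight fun f => hadm f r)
  have hTot : STotal p d F = ∑ P ∈ B, Nat.card (WM F P.parts) := by
    rw [← count_sigma (F := F) (fun M => True) B (by simp [hB])
      (fun P hP => (hw P hP).1)]
    refine Nat.card_congr (Equiv.subtypeEquivRight fun f => ?_)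
    constructor
    · rintro ⟨r, h⟩
      rw [hadm] at h
      exact ⟨h.1, trivial, h.2.2⟩
    · rintro ⟨h1, -, h3⟩
      refine ⟨(rtype (f.denom.map (algebraMap F (AlgebraicClosure F)))).card - 1, ?_⟩
      rw [hadm]
      refine ⟨h1, ?_, h3⟩
      have : (rtype (f.denom.map (algebraMap F (AlgebraicClosure F)))).card ≠ 0 := by
        intro h
        rw [Multiset.card_eq_zero] at h
        simp [h] at h3
      omega
  have hT : T d r = A.card := rfl
  have hTT : TTotal d = B.card := TTotal_eq d
  have hBpos : 0 < B.card := by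
    refine Finset.card_pos.2 ⟨Nat.Partition.indiscrete (d + 2), ?_⟩
    simp [hB]
  have hp0 : (0 : ℝ) < p := by exact_mod_cast hp.pos
  have hwR : ∀ P ∈ B, (p : ℝ) ^ (d + 3) * (1 - Cn / p) ≤ (Nat.card (WM F P.parts) : ℝ) ∧
      (Nat.card (WM F P.parts) : ℝ) ≤ (p : ℝ) ^ (d + 3) := by
    intro P hP
    obtain ⟨-, h1, h2⟩ := hw P hP
    refine ⟨?_, by exact_mod_cast h1⟩
    have h2' : (p : ℝ) * (p : ℝ) ^ (d + 3) ≤ p * (Nat.card (WM F P.parts) : ℝ) + Cn * (p : ℝ) ^ (d + 3) := by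
      exact_mod_cast h2
    refine le_of_mul_le_mul_left ?_ hp0
    have : (p : ℝ) * ((p : ℝ) ^ (d + 3) * (1 - Cn / p)) = p * (p : ℝ) ^ (d + 3) - Cn * (p : ℝ) ^ (d + 3) := by
      field_simp
    rw [this]
    linarith
  have hsumlow : ∀ A' ⊆ B, (A'.card : ℝ) * ((p : ℝ) ^ (d + 3) * (1 - Cn / p)) ≤
      ∑ P ∈ A', (Nat.card (WM F P.parts) : ℝ) := by
    intro A' hA'
    rw [← nsmul_eq_mul]
    exact Finset.card_nsmul_le_sum _ _ _ fun P hP => (hwR P (hA' hP)).1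
  have hsumup : ∀ A' ⊆ B, ∑ P ∈ A', (Nat.card (WM F P.parts) : ℝ) ≤
      (A'.card : ℝ) * (p : ℝ) ^ (d + 3) := by
    intro A' hA'
    rw [← nsmul_eq_mul]
    exact Finset.sum_le_card_nsmul _ _ _ fun P hP => (hwR P (hA' hP)).2
  rw [hS, hTot, hT, hTT, Nat.cast_sum, Nat.cast_sum]
  refine lt_of_le_of_lt (ratio_est _ _ _ _ ((p : ℝ) ^ (d + 3)) (Cn / p) (Nat.cast_nonneg _)
    (by exact_mod_cast Finset.card_le_card hAB) (by exact_mod_cast hBpos) (pow_pos hp0 _)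
    (by positivity) ?_ (hsumlow A hAB) (hsumup A hAB) (hsumlow B subset_rfl) (hsumup B subset_rfl)) ?_
  · rw [div_le_iff₀ hp0]
    have : (2 : ℝ) * Cn ≤ p := by exact_mod_cast hpC
    linarith
  · have h1 : 2 * (Cn : ℝ) / ε < p := lt_of_lt_of_le hN₁ (by exact_mod_cast hpN)
    rw [div_lt_iff₀ hε] at h1
    rw [← mul_div_assoc, div_lt_iff₀ hp0]
    linarith
end
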